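/- Let K be a compact Hausdorff space belonging to the class G₀ (defined below). The following conditions are equivalent: (i) K is a Corson compact with property (M); (ii) every closed linear subspace of C(K) has a 1-projectional skeleton; (iii) for every closed linear subspace Y of C(K), the dual unit ball (B_{Y*}, w*) has a retractional skeleton. -/

import Mathlib

/-!
*(ii) ⇒ (iii).* Adjoints of the projections of a 1-projectional skeleton act on the dual ball as
weak*-continuous retractions with metrizable ranges.

*(iii) ⇒ (i).* The set induced by a retractional skeleton (the union of the ranges) is dense,
countably closed and countably tight. In the dual ball of a function space `Y` it contains every
evaluation at a point where some member of `Y` peaks, and further evaluations when `Y` glues two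
points. Well-chosen subspaces `Y` then give:

* `K` and its continuous images contain no copy of `[0, ω₁]`, so membership in `G₀` makes the `Gδ`
  points dense;
* with `Y = {f | f x = f b}`, each point is in the closure of countably many `Gδ` points, so all
  evaluations on `C(K)` lie in the induced set, `K` has a skeleton consisting of retractions whose
  ranges cover it, and such spaces are Corson compact, by induction on the cardinality of a dense
  subset;
* with `Y = {f | ∫ f dμ = f x₀}`, the support of `μ` is separable.

*(i) ⇒ (ii).* For `K` embedded in a Σ-product, cofinally many countable coordinate sets `C` are
good: erasing the coordinates outside `C` is a retraction `ρ_C` of `K`. By property (M) and the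
Riesz representation, each functional on `C(K)` is invariant under `f ↦ f ∘ ρ_C` for all large
good `C`. A closing-off argument with functionals annihilating `Y` shows that cofinally many of
these projections leave a closed subspace `Y` invariant; their restrictions to `Y` form a
1-projectional skeleton.
-/

open Filter Topology TopologicalSpace Set

universe u v

/-- A retractional skeleton in a topological space `K`: a family `r s : C(K, K)` of continuous
retractions indexed by an up-directed (nonempty) partially ordered set `Γ` such that
(i) each `r s` has metrizable range and the net `(r s x)` converges to `x`;
(ii) `s ≤ t` implies `r s ∘ r t = r t ∘ r s = r s`;
(iii) each strictly increasing sequence has a supremum `t` and `r t x = lim_n r (f n) x`. -/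
structure RetractionalSkeleton (K : Type u) [TopologicalSpace K] : Type (u + 1) where
  Γ : Type u
  [po : PartialOrder Γ]
  [ne : Nonempty Γ]
  directed : ∀ s t : Γ, ∃ w, s ≤ w ∧ t ≤ w
  r : Γ → C(K, K)
  isRetraction : ∀ s, ∀ x : K, r s (r s x) = r s x
  metrizable : ∀ s, MetrizableSpace ↥(Set.range (r s))
  tendsto_id : ∀ x : K, Tendsto (fun s => r s x) atTop (𝓝 x)
  comp_eq_of_le : ∀ s t : Γ, s ≤ t → ∀ x : K, r s (r t x) = r s x ∧ r t (r s x) = r s x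
  sup_seq : ∀ f : ℕ → Γ, StrictMono f → ∃ t : Γ, IsLUB (Set.range f) t ∧
    ∀ x : K, Tendsto (fun n => r (f n) x) atTop (𝓝 (r t x))

/-- The set `D(𝔰) = ⋃ s, r s [K]` induced by a retractional skeleton. -/
def RetractionalSkeleton.inducedSet {K : Type u} [TopologicalSpace K]
    (𝔰 : RetractionalSkeleton K) : Set K := ⋃ s, Set.range (𝔰.r s)

/-- `D` is induced by an r-skeleton in `K`. -/
def IsInducedByRSkeleton {K : Type u} [TopologicalSpace K] (D : Set K) : Prop :=
  ∃ 𝔰 : RetractionalSkeleton K, 𝔰.inducedSet = D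

/-- `K` has a retractional skeleton. -/
def HasRetractionalSkeleton (K : Type u) [TopologicalSpace K] : Prop :=
  Nonempty (RetractionalSkeleton K)

/-- `K` is a Corson compact space: it is homeomorphic to a compact subset of
`Σ(Γ) = {x ∈ ℝ^Γ : x γ ≠ 0 for at most countably many γ}` for some set `Γ`. -/
def IsCorsonCompact (K : Type u) [TopologicalSpace K] : Prop :=
  ∃ (Γ : Type u) (A : Set (Γ → ℝ)), IsCompact A ∧
    (∀ x ∈ A, {γ | x γ ≠ 0}.Countable) ∧ Nonempty (K ≃ₜ ↥A)

/-- A projectional skeleton in a normed space `X`: a family of bounded linear projections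
indexed by an up-directed (nonempty) partially ordered set `Γ` such that
(i) `X = ⋃ s, P s [X]` and each `P s [X]` is separable;
(ii) `s ≤ t` implies `P s ∘ P t = P t ∘ P s = P s`;
(iii) each strictly increasing sequence has a supremum `t` with
`P t [X] = closure (⋃ n, P (f n) [X])`. -/
structure ProjectionalSkeleton (X : Type u) [NormedAddCommGroup X] [NormedSpace ℝ X] :
    Type (u + 1) where
  Γ : Type u
  [po : PartialOrder Γ]
  [ne : Nonempty Γ]
  directed : ∀ s t : Γ, ∃ w, s ≤ w ∧ t ≤ w
  P : Γ → X →L[ℝ] X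
  idem : ∀ s, ∀ x : X, P s (P s x) = P s x
  separable : ∀ s, IsSeparable (Set.range (P s))
  covers : ∀ x : X, ∃ s, x ∈ Set.range (P s)
  comp_eq_of_le : ∀ s t : Γ, s ≤ t → ∀ x : X, P s (P t x) = P s x ∧ P t (P s x) = P s x
  sup_seq : ∀ f : ℕ → Γ, StrictMono f → ∃ t : Γ, IsLUB (Set.range f) t ∧
    (Set.range (P t) : Set X) = closure (⋃ n, Set.range (P (f n)))

/-- `X` has a 1-projectional skeleton: a projectional skeleton with `‖P s‖ ≤ 1` for all `s`. -/
def Has1ProjectionalSkeleton (X : Type u) [NormedAddCommGroup X] [NormedSpace ℝ X] : Prop :=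
  ∃ 𝔰 : ProjectionalSkeleton X, ∀ s, ‖𝔰.P s‖ ≤ 1

/-- The closed unit ball of the dual of `X`, as a subset of the weak* dual `(X*, w*)`. -/
def dualBall (X : Type u) [NormedAddCommGroup X] [NormedSpace ℝ X] : Set (WeakDual ℝ X) :=
  {φ | ∀ x : X, |φ x| ≤ ‖x‖}

/-- The first uncountable ordinal `ω₁`. -/
noncomputable def omega1 : Ordinal.{0} := (Cardinal.aleph 1).ord

/-- The ordinal segment `[0, ω₁]` with its (order-induced) topology. -/
abbrev OrdinalSegmentOmega1 : Type 1 := ↥(Set.Iic omega1)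

/-- `K` belongs to the class `G₀`: for every nonempty open `U ⊆ K`, if `U` contains no
Gδ point of `K`, then the one-point compactification of `U` contains a homeomorphic copy
of the ordinal segment `[0, ω₁]`. -/
def InClassG0 (K : Type u) [TopologicalSpace K] : Prop :=
  ∀ U : Set K, IsOpen U → U.Nonempty → (∀ x ∈ U, ¬ IsGδ ({x} : Set K)) →
    ∃ f : OrdinalSegmentOmega1 → OnePoint ↥U, Topology.IsEmbedding f

/-- `K` has property (M): every Radon (regular Borel) probability measure on `K` has
separable support (the support being the set of points all of whose neighborhoods have
positive measure). -/
def HasPropertyM (K : Type u) [TopologicalSpace K] [MeasurableSpace K] : Prop :=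
  ∀ μ : MeasureTheory.Measure K, MeasureTheory.IsProbabilityMeasure μ → μ.Regular →
    IsSeparable {x : K | ∀ U ∈ 𝓝 x, 0 < μ U}

attribute [instance] RetractionalSkeleton.po RetractionalSkeleton.ne

/-! ### Sets induced by retractional skeletons -/

lemma exists_strictMono_comp_of_monotone {α : Type*} [PartialOrder α] {f : ℕ → α} (hf : Monotone f)
    (hconst : ∀ N, ∃ n ≥ N, f n ≠ f N) {m : ℕ → ℕ} (hm : Tendsto m atTop atTop) :
    ∃ k : ℕ → ℕ, StrictMono fun n => f (m (k n)) := by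
  have next : ∀ a, ∃ b, f (m a) < f (m b) := fun a => by
    obtain ⟨n, hn, hne⟩ := hconst (m a)
    obtain ⟨b, hb⟩ := (hm.eventually_ge_atTop n).exists
    exact ⟨b, ((hf hn).lt_of_ne hne.symm).trans_le (hf hb)⟩
  choose g hg using next
  refine ⟨fun n => g^[n] 0, strictMono_nat_of_lt_succ fun n => ?_⟩
  simp only [Function.iterate_succ_apply']
  exact hg _

namespace RetractionalSkeleton

section TopologicalSpace

variable {X : Type u} [TopologicalSpace X] (𝔰 : RetractionalSkeleton X)

instance isDirectedOrder : IsDirectedOrder 𝔰.Γ := ⟨𝔰.directed⟩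

lemma r_r_of_le {s t : 𝔰.Γ} (h : s ≤ t) (x : X) : 𝔰.r s (𝔰.r t x) = 𝔰.r s x :=
  (𝔰.comp_eq_of_le s t h x).1

lemma r_r_of_ge {s t : 𝔰.Γ} (h : s ≤ t) (x : X) : 𝔰.r t (𝔰.r s x) = 𝔰.r s x :=
  (𝔰.comp_eq_of_le s t h x).2

lemma mem_range_r_iff {s : 𝔰.Γ} {x : X} : x ∈ range (𝔰.r s) ↔ 𝔰.r s x = x :=
  ⟨by rintro ⟨y, rfl⟩; exact 𝔰.isRetraction s y, fun h => ⟨x, h⟩⟩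

lemma range_r_mono {s t : 𝔰.Γ} (h : s ≤ t) : range (𝔰.r s) ⊆ range (𝔰.r t) := by
  rintro _ ⟨y, rfl⟩
  exact ⟨𝔰.r s y, 𝔰.r_r_of_ge h y⟩

lemma r_eq_r_of_le {s t : 𝔰.Γ} (h : s ≤ t) {x y : X} (hxy : 𝔰.r t x = 𝔰.r t y) :
    𝔰.r s x = 𝔰.r s y := by
  rw [← 𝔰.r_r_of_le h x, hxy, 𝔰.r_r_of_le h y]

lemma mem_inducedSet_iff {x : X} : x ∈ 𝔰.inducedSet ↔ ∃ s, 𝔰.r s x = x := by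
  simp only [inducedSet, mem_iUnion, mem_range_r_iff]

lemma range_r_subset_inducedSet (s : 𝔰.Γ) : range (𝔰.r s) ⊆ 𝔰.inducedSet :=
  subset_iUnion (fun s => range (𝔰.r s)) s

lemma dense_inducedSet : Dense 𝔰.inducedSet := fun x =>
  mem_closure_of_tendsto (𝔰.tendsto_id x) <| Eventually.of_forall fun s =>
    𝔰.range_r_subset_inducedSet s (mem_range_self x)

lemma exists_isLUB_tendsto {f : ℕ → 𝔰.Γ} (hf : Monotone f) :
    ∃ t : 𝔰.Γ, IsLUB (range f) t ∧ ∀ x, Tendsto (fun n => 𝔰.r (f n) x) atTop (𝓝 (𝔰.r t x)) := by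
  by_cases hconst : ∃ N, ∀ n ≥ N, f n = f N
  · obtain ⟨N, hN⟩ := hconst
    refine ⟨f N, ⟨?_, fun b hb => hb ⟨N, rfl⟩⟩, fun x => tendsto_const_nhds.congr' ?_⟩
    · rintro _ ⟨n, rfl⟩
      exact (hf (le_max_left n N)).trans_eq (hN _ (le_max_right n N))
    · filter_upwards [eventually_ge_atTop N] with n hn
      rw [hN n hn]
  push Not at hconst
  have isLUB_of_subseq {k : ℕ → ℕ} (hk : StrictMono fun n => f (k n)) {t : 𝔰.Γ}
      (ht : IsLUB (range fun n => f (k n)) t) : IsLUB (range f) t := by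
    have hk' : StrictMono k := fun _ _ h => hf.reflect_lt (hk h)
    rwa [IsLUB, ← hf.upperBounds_range_comp_tendsto_atTop hk'.tendsto_atTop]
  obtain ⟨k, hk⟩ := exists_strictMono_comp_of_monotone hf hconst Filter.tendsto_id
  obtain ⟨t, ht, -⟩ := 𝔰.sup_seq _ hk
  refine ⟨t, isLUB_of_subseq hk ht, fun x => tendsto_of_subseq_tendsto fun m hm => ?_⟩
  obtain ⟨l, hl⟩ := exists_strictMono_comp_of_monotone hf hconst hm
  obtain ⟨t', ht', hlim⟩ := 𝔰.sup_seq _ hl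
  rw [(isLUB_of_subseq hk ht).unique (isLUB_of_subseq hl ht')]
  exact ⟨l, hlim x⟩

lemma exists_ge_subset_range_r {E : Set X} (hE : E.Countable) (hED : E ⊆ 𝔰.inducedSet)
    (s₀ : 𝔰.Γ) : ∃ s ≥ s₀, E ⊆ range (𝔰.r s) := by
  rcases E.eq_empty_or_nonempty with rfl | hne
  · exact ⟨s₀, le_rfl, empty_subset _⟩
  obtain ⟨e, rfl⟩ := hE.exists_eq_range hne
  choose σ hσ using fun n => 𝔰.mem_inducedSet_iff.1 (hED ⟨n, rfl⟩)
  choose j hj₁ hj₂ using 𝔰.directed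
  let f : ℕ → 𝔰.Γ := fun n => Nat.rec s₀ (fun m a => j a (σ m)) n
  obtain ⟨t, ht, -⟩ := 𝔰.exists_isLUB_tendsto (monotone_nat_of_le_succ fun n => hj₁ (f n) (σ n))
  refine ⟨t, ht.1 ⟨0, rfl⟩, ?_⟩
  rintro _ ⟨n, rfl⟩
  exact 𝔰.range_r_mono ((hj₂ (f n) (σ n)).trans (ht.1 ⟨n + 1, rfl⟩)) (𝔰.mem_range_r_iff.2 (hσ n))

lemma exists_countable_r_mem_closure_image (s : 𝔰.Γ) {A : Set X} {x : X} (hx : x ∈ closure A) :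
    ∃ C ⊆ A, C.Countable ∧ 𝔰.r s x ∈ closure (𝔰.r s '' C) := by
  have := 𝔰.metrizable s
  let ρ : X → range (𝔰.r s) := rangeFactorization (𝔰.r s)
  have hρ : Continuous ρ := (𝔰.r s).continuous.rangeFactorization
  obtain ⟨y, hy, hlim⟩ := mem_closure_iff_seq_limit.1
    (image_closure_subset_closure_image hρ (mem_image_of_mem ρ hx))
  choose a haA hay using hy
  refine ⟨range a, range_subset_iff.2 haA, countable_range a, ?_⟩
  refine mem_closure_of_tendsto ((continuous_subtype_val.tendsto _).comp hlim)
    (Eventually.of_forall fun n => ⟨a n, mem_range_self n, ?_⟩)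
  exact congrArg Subtype.val (hay n)

section Restrict

variable {F : Set X} (hF : IsClosed F) (hcof : ∀ s, ∃ t ≥ s, MapsTo (𝔰.r t) F F)

/-- The restriction of a skeleton to a closed set `F` that is invariant under cofinally many of the
retractions; the index set consists of the indices of the latter. -/
def restrict : RetractionalSkeleton F where
  Γ := {t : 𝔰.Γ // MapsTo (𝔰.r t) F F}
  ne := let ⟨t, _, ht⟩ := hcof (Classical.arbitrary _); ⟨⟨t, ht⟩⟩
  directed s t :=
    let ⟨w, hsw, htw⟩ := 𝔰.directed s.1 t.1
    let ⟨w', hw, hw'⟩ := hcof w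
    ⟨⟨w', hw'⟩, hsw.trans hw, htw.trans hw⟩
  r s := ⟨s.2.restrict, (𝔰.r s.1).continuous.restrict s.2⟩
  isRetraction s x := Subtype.ext (𝔰.isRetraction s.1 x)
  metrizable s := by
    have := 𝔰.metrizable s.1
    let j : range (s.2.restrict) → range (𝔰.r s.1) :=
      fun y => ⟨y.1.1, by obtain ⟨_, x, rfl⟩ := y; exact mem_range_self x.1⟩
    have hj : IsEmbedding (Subtype.val ∘ j) :=
      (IsEmbedding.subtypeVal (p := (· ∈ F))).comp IsEmbedding.subtypeVal
    exact (hj.of_comp (by fun_prop) continuous_subtype_val).metrizableSpace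
  tendsto_id x := by
    refine tendsto_subtype_rng.2 ((𝔰.tendsto_id x.1).comp (tendsto_atTop.2 fun s => ?_))
    obtain ⟨t, hst, ht⟩ := hcof s
    filter_upwards [eventually_ge_atTop ⟨t, ht⟩] with w hw
    exact hst.trans hw
  comp_eq_of_le s t h x :=
    ⟨Subtype.ext (𝔰.r_r_of_le h x), Subtype.ext (𝔰.r_r_of_ge h x)⟩
  sup_seq f hf := by
    obtain ⟨t, ht, hlim⟩ := 𝔰.sup_seq (fun n => (f n).1) hf
    refine ⟨⟨t, fun x hx => ?_⟩, ⟨?_, fun b hb => ht.2 ?_⟩, fun x => tendsto_subtype_rng.2 (hlim x)⟩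
    · exact hF.mem_of_tendsto (hlim x) (Eventually.of_forall fun n => (f n).2 hx)
    · rintro _ ⟨n, rfl⟩
      exact ht.1 ⟨n, rfl⟩
    · rintro _ ⟨n, rfl⟩
      exact hb ⟨n, rfl⟩

lemma inducedSet_restrict (hFD : F ⊆ 𝔰.inducedSet) :
    (𝔰.restrict hF hcof).inducedSet = univ := by
  refine eq_univ_of_forall fun x => (mem_inducedSet_iff _).2 ?_
  obtain ⟨s, hs⟩ := 𝔰.mem_inducedSet_iff.1 (hFD x.2)
  obtain ⟨t, hst, ht⟩ := hcof s
  exact ⟨⟨t, ht⟩, Subtype.ext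
    (𝔰.mem_range_r_iff.1 (𝔰.range_r_mono hst (𝔰.mem_range_r_iff.2 hs)))⟩

end Restrict

end TopologicalSpace

section CompactSpace

variable {X : Type u} [TopologicalSpace X] [CompactSpace X] (𝔰 : RetractionalSkeleton X)

lemma exists_countable_dense_image (s : 𝔰.Γ) (F : Set X) :
    ∃ C ⊆ F, C.Countable ∧ ∀ x ∈ F, 𝔰.r s x ∈ closure (𝔰.r s '' C) := by
  have := 𝔰.metrizable s
  have : CompactSpace (range (𝔰.r s)) :=
    isCompact_iff_compactSpace.1 (isCompact_range (𝔰.r s).continuous)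
  let := metrizableSpaceMetric (range (𝔰.r s))
  let ρ : X → range (𝔰.r s) := rangeFactorization (𝔰.r s)
  obtain ⟨B, hBF, hB, hdense⟩ :=
    (IsSeparable.of_separableSpace (ρ '' F)).exists_countable_dense_subset
  obtain ⟨C, hCF, hC⟩ := SurjOn.exists_bijOn_subset hBF
  refine ⟨C, hCF, countable_of_injective_of_countable_image hC.injOn (hC.image_eq ▸ hB),
    fun x hx => ?_⟩
  have := image_closure_subset_closure_image continuous_subtype_val
    (mem_image_of_mem _ (hdense (mem_image_of_mem ρ hx)))
  rwa [← hC.image_eq, image_image] at this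

variable [T2Space X]

lemma isClosed_range_r (s : 𝔰.Γ) : IsClosed (range (𝔰.r s)) :=
  (isCompact_range (𝔰.r s).continuous).isClosed

lemma closure_subset_inducedSet {C : Set X} (hC : C.Countable) (hCD : C ⊆ 𝔰.inducedSet) :
    closure C ⊆ 𝔰.inducedSet := by
  obtain ⟨s, -, hs⟩ := 𝔰.exists_ge_subset_range_r hC hCD (Classical.arbitrary _)
  exact (closure_minimal hs (𝔰.isClosed_range_r s)).trans (𝔰.range_r_subset_inducedSet s)

lemma exists_r_notMem_image {f : ℕ → 𝔰.Γ} (hf : Monotone f) {t : 𝔰.Γ}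
    (hlim : ∀ x, Tendsto (fun n => 𝔰.r (f n) x) atTop (𝓝 (𝔰.r t x)))
    {x : X} {U : Set X} (hU : IsOpen U) (hxU : 𝔰.r t x ∈ U) :
    ∃ n, 𝔰.r (f n) x ∉ 𝔰.r (f n) '' (range (𝔰.r t) \ U) := by
  by_contra! hmem
  let B : ℕ → Set X := fun n => (range (𝔰.r t) \ U) ∩ {z | 𝔰.r (f n) z = 𝔰.r (f n) x}
  have hB : ∀ n, IsClosed (B n) := fun n => ((𝔰.isClosed_range_r t).sdiff hU).inter
    (isClosed_eq (𝔰.r (f n)).continuous continuous_const)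
  obtain ⟨z, hz⟩ : (⋂ n, B n).Nonempty :=
    IsCompact.nonempty_iInter_of_sequence_nonempty_isCompact_isClosed B
      (fun n z hz => ⟨hz.1, 𝔰.r_eq_r_of_le (hf n.le_succ) hz.2⟩) hmem (hB 0).isCompact hB
  rw [mem_iInter] at hz
  have hzx : 𝔰.r t z = 𝔰.r t x :=
    tendsto_nhds_unique (hlim z) ((hlim x).congr fun n => (hz n).2.symm)
  refine (hz 0).1.2 ?_
  rwa [← 𝔰.mem_range_r_iff.1 (hz 0).1.1, hzx]

-- The index `t` is the supremum of a sequence `σ` closed under `s ↦ ⋃ i, c i s`, so that the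
-- topology of `range (r t)` is determined by the retractions `r (σ n)`.
lemma exists_ge_forall_r_mem_closure {ι : Type*} [Countable ι] (c : ι → 𝔰.Γ → Set X)
    (hc : ∀ i s, (c i s).Countable) (hcD : ∀ i s, c i s ⊆ 𝔰.inducedSet) (s₀ : 𝔰.Γ) :
    ∃ t ≥ s₀, ∃ σ : ℕ → 𝔰.Γ, ∀ i x,
      (∀ s, 𝔰.r s x ∈ closure (𝔰.r s '' c i s)) → 𝔰.r t x ∈ closure (⋃ n, c i (σ n)) := by
  choose g hg_le hg using fun s : 𝔰.Γ => 𝔰.exists_ge_subset_range_r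
    (countable_iUnion fun i => hc i s) (iUnion_subset fun i => hcD i s) s
  let σ : ℕ → 𝔰.Γ := fun n => Nat.rec s₀ (fun _ a => g a) n
  have hσ : Monotone σ := monotone_nat_of_le_succ fun n => hg_le (σ n)
  obtain ⟨t, ht, hlim⟩ := 𝔰.exists_isLUB_tendsto hσ
  refine ⟨t, ht.1 ⟨0, rfl⟩, σ, fun i x hx => mem_closure_iff.2 fun U hU hxU => ?_⟩
  obtain ⟨n, hn⟩ := 𝔰.exists_r_notMem_image hσ hlim hU hxU
  have hclosed : IsClosed (𝔰.r (σ n) '' (range (𝔰.r t) \ U)) :=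
    (((𝔰.isClosed_range_r t).sdiff hU).isCompact.image (𝔰.r (σ n)).continuous).isClosed
  obtain ⟨_, hz', z, hz, rfl⟩ := mem_closure_iff.1 (hx (σ n)) _ hclosed.isOpen_compl hn
  refine ⟨z, by_contra fun hzU => hz' ⟨z, ⟨?_, hzU⟩, rfl⟩, mem_iUnion.2 ⟨n, hz⟩⟩
  exact 𝔰.range_r_mono (ht.1 ⟨n + 1, rfl⟩) (hg (σ n) (mem_iUnion.2 ⟨i, hz⟩))

lemma exists_countable_mem_closure {A : Set X} (hA : A ⊆ 𝔰.inducedSet) {x : X}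
    (hx : x ∈ 𝔰.inducedSet) (hxA : x ∈ closure A) : ∃ C ⊆ A, C.Countable ∧ x ∈ closure C := by
  choose c hcA hcc hcx using fun s => 𝔰.exists_countable_r_mem_closure_image s hxA
  obtain ⟨s₀, hs₀⟩ := 𝔰.mem_inducedSet_iff.1 hx
  obtain ⟨t, hst, σ, hσ⟩ := 𝔰.exists_ge_forall_r_mem_closure (fun _ : Unit => c) (fun _ => hcc)
    (fun _ s => (hcA s).trans hA) s₀
  refine ⟨⋃ n, c (σ n), iUnion_subset fun n => hcA _, countable_iUnion fun n => hcc _, ?_⟩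
  have htx : 𝔰.r t x = x :=
    𝔰.mem_range_r_iff.1 (𝔰.range_r_mono hst (𝔰.mem_range_r_iff.2 hs₀))
  simpa only [htx] using hσ () x hcx

lemma exists_countable_mem_closure_image {ι : Type*} {g : ι → X} {S : Set ι}
    (hS : MapsTo g S 𝔰.inducedSet) {x : X} (hx : x ∈ 𝔰.inducedSet) (hxS : x ∈ closure (g '' S)) :
    ∃ J ⊆ S, J.Countable ∧ x ∈ closure (g '' J) := by
  obtain ⟨C, hCS, hC, hxC⟩ := 𝔰.exists_countable_mem_closure hS.image_subset hx hxS
  obtain ⟨J, hJS, hJC⟩ := SurjOn.exists_bijOn_subset hCS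
  rw [← hJC.image_eq] at hC hxC
  exact ⟨J, hJS, countable_of_injective_of_countable_image hJC.injOn hC, hxC⟩

lemma mem_inducedSet_of_forall_mem_closure {ι : Type*} [Countable ι] {V : ι → Set X}
    (hV : ∀ i, IsOpen (V i)) {x : X} (hx : ∀ i, x ∈ closure (V i))
    (hunique : ∀ y, (∀ i, y ∈ closure (V i)) → y = x) : x ∈ 𝔰.inducedSet := by
  have hx' : ∀ i, x ∈ closure (V i ∩ 𝔰.inducedSet) := fun i =>
    closure_minimal (𝔰.dense_inducedSet.open_subset_closure_inter (hV i)) isClosed_closure (hx i)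
  choose c hcA hcc hcx using fun i s => 𝔰.exists_countable_r_mem_closure_image s (hx' i)
  obtain ⟨t, -, σ, hσ⟩ := 𝔰.exists_ge_forall_r_mem_closure c hcc
    (fun i s => (hcA i s).trans inter_subset_right) (Classical.arbitrary _)
  refine 𝔰.mem_inducedSet_iff.2 ⟨t, hunique _ fun i => ?_⟩
  exact closure_mono (iUnion_subset fun n => (hcA i _).trans inter_subset_left) (hσ i x (hcx i))

lemma mem_inducedSet_of_isGδ_singleton {x : X} (hx : IsGδ {x}) : x ∈ 𝔰.inducedSet := by
  obtain ⟨V, hV, hVx⟩ := isGδ_iff_eq_iInter_nat.1 hx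
  have hxV : ∀ n, x ∈ V n := mem_iInter.1 (hVx ▸ mem_singleton x)
  choose C hxC hC hCV using fun n => exists_mem_nhds_isClosed_subset ((hV n).mem_nhds (hxV n))
  refine 𝔰.mem_inducedSet_of_forall_mem_closure (V := fun n => interior (C n))
    (fun n => isOpen_interior) (fun n => subset_closure (mem_interior_iff_mem_nhds.2 (hxC n)))
    fun y hy => hVx.symm.subset (mem_iInter.2 fun n => hCV n ?_)
  exact closure_minimal interior_subset (hC n) (hy n)

lemma exists_inducedSet_eq_univ_of_isClosed {F : Set X} (hF : IsClosed F)
    (hFD : F ⊆ 𝔰.inducedSet) : ∃ 𝔱 : RetractionalSkeleton F, 𝔱.inducedSet = univ := by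
  choose c hcF hcc hcx using fun s => 𝔰.exists_countable_dense_image s F
  have hcof : ∀ s, ∃ t ≥ s, MapsTo (𝔰.r t) F F := fun s => by
    obtain ⟨t, hst, σ, hσ⟩ := 𝔰.exists_ge_forall_r_mem_closure (fun _ : Unit => c) (fun _ => hcc)
      (fun _ s => (hcF s).trans hFD) s
    exact ⟨t, hst, fun x hx => closure_minimal (iUnion_subset fun n => hcF _) hF
      (hσ () x fun s => hcx s x hx)⟩
  exact ⟨𝔰.restrict hF hcof, 𝔰.inducedSet_restrict hF hcof hFD⟩

end CompactSpace

end RetractionalSkeleton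

/-! ### Spaces covered by the ranges of a retractional skeleton are Corson compact -/

lemma exists_monotone_finset_upperBound (α : Type*) [Preorder α] [Nonempty α] [IsDirectedOrder α] :
    ∃ w : Finset α → α, Monotone w ∧ ∀ F, ∀ a ∈ F, a ≤ w F := by
  classical
  choose M hM using fun s : Finset α => s.exists_le
  let H : ∀ F : Finset α, (∀ G ⊂ F, α) → α := fun F rec =>
    M (F.ssubsets.attach.image (fun G => rec G.1 (Finset.mem_ssubsets.1 G.2)) ∪ F)
  let w : Finset α → α := Finset.strongInduction H
  have hw : ∀ F, w F = H F (fun G _ => w G) := Finset.strongInduction_eq H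
  refine ⟨w, fun G F hGF => ?_, fun F a ha => ?_⟩
  · rcases eq_or_ne G F with rfl | hne
    · exact le_rfl
    · rw [hw F]
      refine hM _ _ (Finset.mem_union_left _ (Finset.mem_image.2 ?_))
      exact ⟨⟨G, Finset.mem_ssubsets.2 (hGF.lt_of_ne hne)⟩, Finset.mem_attach _ _, rfl⟩
  · rw [hw F]
    exact hM _ _ (Finset.mem_union_right _ ha)

lemma continuous_of_isClosed_graph {X Y : Type*} [TopologicalSpace X] [TopologicalSpace Y]
    [CompactSpace Y] {f : X → Y} (hf : IsClosed {p : X × Y | p.2 = f p.1}) : Continuous f := by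
  refine continuous_iff_isClosed.2 fun C hC => ?_
  have : f ⁻¹' C = Prod.fst '' ({p : X × Y | p.2 = f p.1} ∩ Prod.snd ⁻¹' C) := by
    ext x
    simp
  rw [this]
  exact isClosedMap_fst_of_compactSpace _ (hf.inter (hC.preimage continuous_snd))

section PointCountable

variable {X : Type u} [TopologicalSpace X]

/-- A set of continuous functions is point-countable if at every point only countably many of its
members do not vanish. -/
def IsPointCountable (E : Set C(X, ℝ)) : Prop := ∀ x, {f ∈ E | f x ≠ 0}.Countable

lemma isCorsonCompact_of_isPointCountable [CompactSpace X] {E : Set C(X, ℝ)}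
    (hE : IsPointCountable E) (hsep : ∀ x y, (∀ f ∈ E, f x = f y) → x = y) :
    IsCorsonCompact X := by
  let e : X → E → ℝ := fun x f => f.1 x
  have he : Continuous e := continuous_pi fun f => f.1.continuous
  have hinj : Function.Injective e := fun x y h => hsep x y fun f hf => congrFun h ⟨f, hf⟩
  refine ⟨E, range e, isCompact_range he, ?_,
    ⟨(he.isClosedEmbedding hinj).isEmbedding.toHomeomorph⟩⟩
  rintro _ ⟨x, rfl⟩
  refine countable_of_injective_of_countable_image Subtype.val_injective.injOn ((hE x).mono ?_)
  rintro _ ⟨f, hf, rfl⟩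
  exact ⟨f.2, hf⟩

lemma exists_countable_continuousMap_determining [CompactSpace X] {Y : Type*} [TopologicalSpace Y]
    (g : C(X, Y)) [MetrizableSpace (range g)] : ∃ E : Set C(X, ℝ), E.Countable ∧
      ∀ x y, (∀ f ∈ E, f x = f y) → g x = g y := by
  have : CompactSpace (range g) := isCompact_iff_compactSpace.1 (isCompact_range g.continuous)
  let := metrizableSpaceMetric (range g)
  obtain ⟨B, hB, hdense⟩ := exists_countable_dense (range g)
  let ρ : C(X, range g) := ⟨rangeFactorization g, g.continuous.rangeFactorization⟩
  refine ⟨(fun b => ⟨fun x => dist (ρ x) b, by fun_prop⟩) '' B, hB.image _, fun x y h => ?_⟩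
  have hdist : (fun z => dist (ρ x) z) = fun z => dist (ρ y) z :=
    Continuous.ext_on hdense (by fun_prop) (by fun_prop) fun b hb => h _ (mem_image_of_mem _ hb)
  have hρ : dist (ρ x) (ρ y) = 0 := by simpa only [dist_self] using congrFun hdist (ρ y)
  exact congrArg Subtype.val (dist_eq_zero.1 hρ)

end PointCountable

/-- A commuting system of retractions `ρ S` of `X`, indexed by all subsets `S` of a set `A`, such
that `ρ S` is determined by the `ρ F` with `F ⊆ S` finite and depends, at each point, only on
countably many elements of `S`. A compact space with such a system is Corson compact. -/
structure RetractionSystem (A : Type v) (X : Type u) [TopologicalSpace X] where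
  ρ : Set A → C(X, X)
  ρ_univ : ∀ x, ρ univ x = x
  ρ_ρ_of_subset : ∀ {S T}, S ⊆ T → ∀ x, ρ S (ρ T x) = ρ S x
  eq_of_forall_finset : ∀ {S x y},
    (∀ F : Finset A, (F : Set A) ⊆ S → ρ F x = ρ F y) → ρ S x = ρ S y
  exists_countable_support : ∀ S x, ∃ T ⊆ S, T.Countable ∧ ∀ T', T ⊆ T' → T' ⊆ S → ρ T' x = ρ S x
  metrizable_range : ∀ {S}, S.Countable → MetrizableSpace (range (ρ S))

namespace RetractionSystem

variable {A : Type v} {X : Type u} [TopologicalSpace X] (𝔯 : RetractionSystem A X)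

section LinearOrder

variable {T : Type*} [LinearOrder T] (g : T → A)

lemma ρ_image_eq_of_forall_Iic {x y : X} (h₀ : 𝔯.ρ ∅ x = 𝔯.ρ ∅ y) {J : Set T}
    (hJ : ∀ b ∈ J, 𝔯.ρ (g '' Iic b) x = 𝔯.ρ (g '' Iic b) y) :
    𝔯.ρ (g '' J) x = 𝔯.ρ (g '' J) y := by
  classical
  refine 𝔯.eq_of_forall_finset fun F hF => ?_
  obtain ⟨J', hJ'J, rfl⟩ := Finset.subset_set_image_iff.1 hF
  rcases J'.eq_empty_or_nonempty with rfl | hne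
  · simpa using h₀
  obtain ⟨b, hb, hmax⟩ := J'.exists_max_image id hne
  have hsub : ((J'.image g : Finset A) : Set A) ⊆ g '' Iic b := by
    rw [Finset.coe_image]
    exact image_mono hmax
  rw [← 𝔯.ρ_ρ_of_subset hsub x, hJ b (hJ'J hb), 𝔯.ρ_ρ_of_subset hsub]

lemma countable_setOf_ρ_Iic_ne_ρ_Iio [WellFoundedLT T] (x : X) :
    {a | 𝔯.ρ (g '' Iic a) x ≠ 𝔯.ρ (g '' Iio a) x}.Countable := by
  set B := {a | 𝔯.ρ (g '' Iic a) x ≠ 𝔯.ρ (g '' Iio a) x}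
  have of_lowerSet : ∀ J : Set T, IsLowerSet J → (∀ c ∈ J, (B ∩ Iio c).Countable) →
      (B ∩ J).Countable := by
    intro J hJ hc
    obtain ⟨T', hT'J, hT'c, hT'⟩ := 𝔯.exists_countable_support (g '' J) x
    obtain ⟨J', hJ'J, hJ'⟩ := SurjOn.exists_bijOn_subset hT'J
    have hJ'c : J'.Countable :=
      countable_of_injective_of_countable_image hJ'.injOn (hJ'.image_eq ▸ hT'c)
    refine (hJ'c.biUnion fun b hb => (hc b (hJ'J hb)).insert b).mono ?_
    rintro a ⟨haB, haJ⟩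
    by_contra hcon
    have hlt : ∀ b ∈ J', b < a := fun b hb => not_le.1 fun hab => hcon <| mem_iUnion₂.2
      ⟨b, hb, hab.eq_or_lt.imp_right fun h => ⟨haB, h⟩⟩
    have h₁ : T' ⊆ g '' Iio a := hJ'.image_eq ▸ image_mono hlt
    have h₂ : g '' Iio a ⊆ g '' Iic a := image_mono Iio_subset_Iic_self
    have h₃ : g '' Iic a ⊆ g '' J := image_mono fun b hb => hJ hb haJ
    exact haB <| (hT' _ (h₁.trans h₂) h₃).trans (hT' _ h₁ (h₂.trans h₃)).symm
  have hIio : ∀ c, (B ∩ Iio c).Countable := fun c => by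
    induction c using WellFoundedLT.induction with
    | ind c ih => exact of_lowerSet _ (isLowerSet_Iio c) ih
  simpa only [inter_univ] using of_lowerSet univ isLowerSet_univ fun c _ => hIio c

/-- The functions obtained by splitting `ρ (g '' J)` into its increments
along the well-order `T`. -/
def increments (E₀ : Set C(X, ℝ)) (E : T → Set C(X, ℝ)) : Set C(X, ℝ) :=
  (fun f => f.comp (𝔯.ρ ∅)) '' E₀ ∪
    ⋃ a, (fun f => f.comp (𝔯.ρ (g '' Iic a)) - f.comp (𝔯.ρ (g '' Iio a))) '' E a

lemma isPointCountable_increments [WellFoundedLT T] {E₀ : Set C(X, ℝ)} (hE₀ : IsPointCountable E₀)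
    {E : T → Set C(X, ℝ)} (hE : ∀ a, IsPointCountable (E a)) :
    IsPointCountable (𝔯.increments g E₀ E) := by
  intro x
  refine (((hE₀ (𝔯.ρ ∅ x)).image fun f => f.comp (𝔯.ρ ∅)).union <|
    (𝔯.countable_setOf_ρ_Iic_ne_ρ_Iio g x).biUnion fun a _ =>
      ((hE a (𝔯.ρ (g '' Iic a) x)).union (hE a (𝔯.ρ (g '' Iio a) x))).image fun f =>
        f.comp (𝔯.ρ (g '' Iic a)) - f.comp (𝔯.ρ (g '' Iio a))).mono ?_
  rintro _ ⟨⟨f, hf, rfl⟩ | h, hne⟩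
  · exact Or.inl ⟨f, ⟨hf, hne⟩, rfl⟩
  obtain ⟨a, f, hf, rfl⟩ := mem_iUnion.1 h
  have hne' : f (𝔯.ρ (g '' Iic a) x) ≠ f (𝔯.ρ (g '' Iio a) x) := sub_ne_zero.1 hne
  refine Or.inr (mem_iUnion₂.2 ⟨a, fun h => hne' (congrArg f h), f, ?_, rfl⟩)
  rcases ne_or_eq (f (𝔯.ρ (g '' Iic a) x)) 0 with h | h
  · exact Or.inl ⟨hf, h⟩
  · exact Or.inr ⟨hf, (h ▸ hne').symm⟩

lemma ρ_range_eq_of_forall_increments [WellFoundedLT T] {E₀ : Set C(X, ℝ)}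
    (hE₀ : ∀ x y, (∀ f ∈ E₀, f x = f y) → 𝔯.ρ ∅ x = 𝔯.ρ ∅ y) {E : T → Set C(X, ℝ)}
    (hE : ∀ a x y, (∀ f ∈ E a, f x = f y) → 𝔯.ρ (g '' Iic a) x = 𝔯.ρ (g '' Iic a) y) {x y : X}
    (hxy : ∀ f ∈ 𝔯.increments g E₀ E, f x = f y) : 𝔯.ρ (range g) x = 𝔯.ρ (range g) y := by
  have h₀ : 𝔯.ρ ∅ x = 𝔯.ρ ∅ y := by
    rw [← 𝔯.ρ_ρ_of_subset subset_rfl x, ← 𝔯.ρ_ρ_of_subset subset_rfl y]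
    exact hE₀ _ _ fun f hf => hxy _ (Or.inl ⟨f, hf, rfl⟩)
  have hIic : ∀ a, 𝔯.ρ (g '' Iic a) x = 𝔯.ρ (g '' Iic a) y := fun a => by
    induction a using WellFoundedLT.induction with
    | ind a ih =>
      have hIio := 𝔯.ρ_image_eq_of_forall_Iic g h₀ (J := Iio a) ih
      rw [← 𝔯.ρ_ρ_of_subset subset_rfl x, ← 𝔯.ρ_ρ_of_subset subset_rfl y]
      refine hE a _ _ fun f hf => ?_
      have := hxy _ (Or.inr (mem_iUnion.2 ⟨a, f, hf, rfl⟩))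
      simpa only [ContinuousMap.sub_apply, ContinuousMap.comp_apply, hIio,
        sub_left_inj] using this
  simpa only [image_univ] using 𝔯.ρ_image_eq_of_forall_Iic g h₀ (J := univ) fun b _ => hIic b

end LinearOrder

variable [CompactSpace X]

lemma exists_isPointCountable_of_countable {S : Set A} (hS : S.Countable) :
    ∃ E : Set C(X, ℝ), IsPointCountable E ∧
      ∀ x y, (∀ f ∈ E, f x = f y) → 𝔯.ρ S x = 𝔯.ρ S y := by
  have := 𝔯.metrizable_range hS
  obtain ⟨E, hE, hsep⟩ := exists_countable_continuousMap_determining (𝔯.ρ S)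
  exact ⟨E, fun x => hE.mono (sep_subset _ _), hsep⟩

lemma exists_isPointCountable (S : Set A) : ∃ E : Set C(X, ℝ), IsPointCountable E ∧
    ∀ x y, (∀ f ∈ E, f x = f y) → 𝔯.ρ S x = 𝔯.ρ S y := by
  induction hκ : Cardinal.mk S using WellFoundedLT.induction generalizing S with
  | ind κ ih =>
  by_cases hS : S.Countable
  · exact 𝔯.exists_isPointCountable_of_countable hS
  have hS₀ : Cardinal.aleph0 ≤ κ := by
    rw [← hκ]
    exact (not_le.1 (mt Cardinal.le_aleph0_iff_set_countable.1 hS)).le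
  obtain ⟨g⟩ : Nonempty (κ.ord.ToType ≃ S) := Cardinal.eq.1 (by simp [hκ])
  have hrange : range (fun a => (g a : A)) = S := by
    rw [← Function.comp_def, EquivLike.range_comp, Subtype.range_coe]
  have hcard : ∀ a, Cardinal.mk ((fun a => (g a : A)) '' Iic a) < κ := fun a => by
    have := Cardinal.mk_Iic_lt a (by simp) (by simpa using hS₀)
    exact Cardinal.mk_image_le.trans_lt (by simpa using this)
  obtain ⟨E₀, hE₀, hsep₀⟩ := 𝔯.exists_isPointCountable_of_countable countable_empty
  choose E hE hsep using fun a => ih _ (hcard a) _ rfl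
  refine ⟨_, 𝔯.isPointCountable_increments (fun a => (g a : A)) hE₀ hE, fun x y hxy => ?_⟩
  exact hrange ▸ 𝔯.ρ_range_eq_of_forall_increments _ hsep₀ hsep hxy

theorem isCorsonCompact (𝔯 : RetractionSystem A X) : IsCorsonCompact X := by
  obtain ⟨E, hE, hsep⟩ := 𝔯.exists_isPointCountable univ
  exact isCorsonCompact_of_isPointCountable hE fun x y h => by
    simpa only [𝔯.ρ_univ] using hsep x y h

end RetractionSystem

namespace RetractionalSkeleton

section Hull

variable {X : Type u} [TopologicalSpace X] (𝔰 : RetractionalSkeleton X)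

/-- The closure of the union of the ranges of the retractions `r (w F)`, `F ⊆ S` finite. The map
`w` is meant to be a monotone choice of upper bounds of finite sets of indices. -/
def hull (w : Finset 𝔰.Γ → 𝔰.Γ) (S : Set 𝔰.Γ) : Set X :=
  closure (⋃ (F : Finset 𝔰.Γ) (_ : (F : Set 𝔰.Γ) ⊆ S), range (𝔰.r (w F)))

variable {w : Finset 𝔰.Γ → 𝔰.Γ}

lemma isClosed_hull (S : Set 𝔰.Γ) : IsClosed (𝔰.hull w S) := isClosed_closure

lemma hull_mono {S T : Set 𝔰.Γ} (h : S ⊆ T) : 𝔰.hull w S ⊆ 𝔰.hull w T :=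
  closure_mono <| iUnion_mono fun _ => iUnion_mono' fun hF => ⟨hF.trans h, subset_rfl⟩

lemma r_mem_hull {S : Set 𝔰.Γ} {F : Finset 𝔰.Γ} (hF : (F : Set 𝔰.Γ) ⊆ S) (x : X) :
    𝔰.r (w F) x ∈ 𝔰.hull w S :=
  subset_closure (mem_iUnion₂.2 ⟨F, hF, mem_range_self x⟩)

lemma hull_univ (hD : 𝔰.inducedSet = univ) (hle : ∀ F, ∀ s ∈ F, s ≤ w F) :
    𝔰.hull w univ = univ := by
  refine eq_univ_of_forall fun x => ?_
  obtain ⟨s, hs⟩ := 𝔰.mem_inducedSet_iff.1 (hD ▸ mem_univ x)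
  have hx : x ∈ range (𝔰.r (w {s})) :=
    𝔰.range_r_mono (hle {s} s (Finset.mem_singleton_self s)) (𝔰.mem_range_r_iff.2 hs)
  exact 𝔰.mem_range_r_iff.1 hx ▸ 𝔰.r_mem_hull (subset_univ _) x

variable [CompactSpace X] [T2Space X]

lemma exists_hull_subset_range_r (hw : Monotone w) {S : Set 𝔰.Γ} (hS : S.Countable) :
    ∃ t, 𝔰.hull w S ⊆ range (𝔰.r t) ∧ ∀ x y,
      (∀ F : Finset 𝔰.Γ, (F : Set 𝔰.Γ) ⊆ S → 𝔰.r (w F) x = 𝔰.r (w F) y) →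
      𝔰.r t x = 𝔰.r t y := by
  classical
  have := hS.to_subtype
  obtain ⟨G, hG, hGtop⟩ := exists_seq_monotone_tendsto_atTop_atTop (Finset S)
  let j : Finset S → Finset 𝔰.Γ := Finset.map (Function.Embedding.subtype (· ∈ S))
  have hj : ∀ F, (j F : Set 𝔰.Γ) ⊆ S := fun F _ => F.property_of_mem_map_subtype
  have hjG : Monotone fun n => j (G n) := fun m n h => Finset.map_subset_map.2 (hG h)
  obtain ⟨t, ht, hlim⟩ := 𝔰.exists_isLUB_tendsto (hw.comp hjG)
  refine ⟨t, closure_minimal (iUnion₂_subset fun F hF => ?_) (𝔰.isClosed_range_r t),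
    fun x y h => tendsto_nhds_unique (hlim x) ?_⟩
  · obtain ⟨n, hn⟩ := (hGtop.eventually_ge_atTop (F.subtype (· ∈ S))).exists
    have hFn : F ⊆ j (G n) := by
      rw [← Finset.subtype_map_of_mem hF]
      exact Finset.map_subset_map.2 hn
    have hnt : w (j (G n)) ≤ t := ht.1 (mem_range_self n)
    exact 𝔰.range_r_mono ((hw hFn).trans hnt)
  · exact (hlim y).congr fun n => (h (j (G n)) (hj (G n))).symm

lemma exists_countable_mem_hull (hD : 𝔰.inducedSet = univ) {S : Set 𝔰.Γ} {x : X}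
    (hx : x ∈ 𝔰.hull w S) : ∃ T ⊆ S, T.Countable ∧ x ∈ 𝔰.hull w T := by
  obtain ⟨C, hC, hCc, hxC⟩ :=
    𝔰.exists_countable_mem_closure (hD ▸ subset_univ _) (hD ▸ mem_univ x) hx
  have hF : ∀ c ∈ C, ∃ F : Finset 𝔰.Γ, (F : Set 𝔰.Γ) ⊆ S ∧ c ∈ range (𝔰.r (w F)) :=
    fun c hc => by simpa only [mem_iUnion₂, exists_prop] using hC hc
  choose! F hFS hF using hF
  exact ⟨⋃ c ∈ C, F c, iUnion₂_subset hFS, hCc.biUnion fun c _ => (F c).countable_toSet,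
    closure_mono (fun c hc => mem_iUnion₂.2
      ⟨F c, subset_biUnion_of_mem (u := fun c => (F c : Set 𝔰.Γ)) hc, hF c hc⟩) hxC⟩

lemma eq_of_mem_hull (hD : 𝔰.inducedSet = univ) (hw : Monotone w) {S : Set 𝔰.Γ} {x y : X}
    (hx : x ∈ 𝔰.hull w S) (hy : y ∈ 𝔰.hull w S)
    (h : ∀ F : Finset 𝔰.Γ, (F : Set 𝔰.Γ) ⊆ S → 𝔰.r (w F) x = 𝔰.r (w F) y) : x = y := by
  obtain ⟨T₁, hT₁S, hT₁, hx₁⟩ := 𝔰.exists_countable_mem_hull hD hx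
  obtain ⟨T₂, hT₂S, hT₂, hy₂⟩ := 𝔰.exists_countable_mem_hull hD hy
  obtain ⟨t, ht, hdet⟩ := 𝔰.exists_hull_subset_range_r hw (hT₁.union hT₂)
  rw [← 𝔰.mem_range_r_iff.1 (ht (𝔰.hull_mono subset_union_left hx₁)),
    ← 𝔰.mem_range_r_iff.1 (ht (𝔰.hull_mono subset_union_right hy₂))]
  exact hdet x y fun F hF => h F (hF.trans (union_subset hT₁S hT₂S))

lemma exists_mem_hull_r_eq (hw : Monotone w) (S : Set 𝔰.Γ) (x : X) : ∃ y ∈ 𝔰.hull w S,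
    ∀ F : Finset 𝔰.Γ, (F : Set 𝔰.Γ) ⊆ S → 𝔰.r (w F) y = 𝔰.r (w F) x := by
  classical
  let B : {F : Finset 𝔰.Γ // (F : Set 𝔰.Γ) ⊆ S} → Set X := fun F =>
    𝔰.hull w S ∩ {y | 𝔰.r (w F.1) y = 𝔰.r (w F.1) x}
  have hB : ∀ F, IsClosed (B F) := fun F =>
    (𝔰.isClosed_hull S).inter (isClosed_eq (𝔰.r _).continuous continuous_const)
  have hBne : ∀ F, (B F).Nonempty := fun F =>
    ⟨𝔰.r (w F.1) x, 𝔰.r_mem_hull F.2 x, 𝔰.isRetraction _ _⟩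
  have hBdir : Directed (· ⊇ ·) B := fun F G =>
    ⟨⟨F.1 ∪ G.1, Finset.coe_union F.1 G.1 ▸ union_subset F.2 G.2⟩,
      fun y hy => ⟨hy.1, 𝔰.r_eq_r_of_le (hw Finset.subset_union_left) hy.2⟩,
      fun y hy => ⟨hy.1, 𝔰.r_eq_r_of_le (hw Finset.subset_union_right) hy.2⟩⟩
  have : Nonempty {F : Finset 𝔰.Γ // (F : Set 𝔰.Γ) ⊆ S} := ⟨⟨∅, by simp⟩⟩
  obtain ⟨y, hy⟩ := IsCompact.nonempty_iInter_of_directed_nonempty_isCompact_isClosed B hBdir hBne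
    (fun F => (hB F).isCompact) hB
  rw [mem_iInter] at hy
  exact ⟨y, (hy ⟨∅, by simp⟩).1, fun F hF => (hy ⟨F, hF⟩).2⟩

lemma exists_hullRetraction (hD : 𝔰.inducedSet = univ) (hw : Monotone w) (S : Set 𝔰.Γ) :
    ∃ R : C(X, X), ∀ x y, R x = y ↔ y ∈ 𝔰.hull w S ∧
      ∀ F : Finset 𝔰.Γ, (F : Set 𝔰.Γ) ⊆ S → 𝔰.r (w F) y = 𝔰.r (w F) x := by
  choose R hR hRr using 𝔰.exists_mem_hull_r_eq hw S
  have hiff : ∀ x y, y = R x ↔ y ∈ 𝔰.hull w S ∧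
      ∀ F : Finset 𝔰.Γ, (F : Set 𝔰.Γ) ⊆ S → 𝔰.r (w F) y = 𝔰.r (w F) x := fun x y =>
    ⟨by rintro rfl; exact ⟨hR x, hRr x⟩, fun h => 𝔰.eq_of_mem_hull hD hw h.1 (hR x) fun F hF =>
      (h.2 F hF).trans (hRr x F hF).symm⟩
  refine ⟨⟨R, continuous_of_isClosed_graph ?_⟩, fun x y => eq_comm.trans (hiff x y)⟩
  simp only [hiff, ofPred_and, ofPred_forall]
  exact ((𝔰.isClosed_hull S).preimage continuous_snd).inter <| isClosed_iInter fun F =>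
    isClosed_iInter fun _ => isClosed_eq (by fun_prop) (by fun_prop)

lemma exists_retractionSystem (hD : 𝔰.inducedSet = univ) : Nonempty (RetractionSystem 𝔰.Γ X) := by
  obtain ⟨w, hw, hle⟩ := exists_monotone_finset_upperBound 𝔰.Γ
  choose R hR using 𝔰.exists_hullRetraction hD hw
  have hRmem : ∀ S x, R S x ∈ 𝔰.hull w S := fun S x => ((hR S x _).1 rfl).1
  have hRr : ∀ S x, ∀ F : Finset 𝔰.Γ, (F : Set 𝔰.Γ) ⊆ S → 𝔰.r (w F) (R S x) = 𝔰.r (w F) x :=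
    fun S x => ((hR S x _).1 rfl).2
  refine ⟨⟨R, fun x => ?_, fun {S T} h x => ?_, fun {S x y} h => ?_, fun S x => ?_,
    fun {S} hS => ?_⟩⟩
  · exact (hR _ _ _).2 ⟨𝔰.hull_univ hD hle ▸ mem_univ x, fun _ _ => rfl⟩
  · exact (hR _ _ _).2 ⟨hRmem S x, fun F hF => by rw [hRr S x F hF, hRr T x F (hF.trans h)]⟩
  · refine (hR S x _).2 ⟨hRmem S y, fun F hF => ?_⟩
    rw [hRr S y F hF, ← hRr F y F subset_rfl, ← h F hF, hRr F x F subset_rfl]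
  · obtain ⟨T, hTS, hT, hx⟩ := 𝔰.exists_countable_mem_hull hD (hRmem S x)
    exact ⟨T, hTS, hT, fun T' hT' hT'S =>
      (hR _ _ _).2 ⟨𝔰.hull_mono hT' hx, fun F hF => hRr S x F (hF.trans hT'S)⟩⟩
  · obtain ⟨t, ht, -⟩ := 𝔰.exists_hull_subset_range_r hw hS
    have := 𝔰.metrizable t
    exact (IsEmbedding.inclusion ((range_subset_iff.2 (hRmem S)).trans ht)).metrizableSpace

theorem isCorsonCompact_of_inducedSet_eq_univ (hD : 𝔰.inducedSet = univ) : IsCorsonCompact X :=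
  let ⟨𝔯⟩ := 𝔰.exists_retractionSystem hD
  𝔯.isCorsonCompact

end Hull

end RetractionalSkeleton

/-! ### Dual balls -/

section DualBall

variable {X : Type u} [NormedAddCommGroup X] [NormedSpace ℝ X]

instance : CompactSpace (dualBall X) := by
  have h : dualBall X = WeakDual.toStrongDual ⁻¹' Metric.closedBall (0 : StrongDual ℝ X) 1 := by
    ext φ
    simp only [dualBall, mem_ofPred_eq, mem_preimage, mem_closedBall_zero_iff,
      ContinuousLinearMap.opNorm_le_iff zero_le_one, one_mul, Real.norm_eq_abs,
      WeakDual.coe_toStrongDual]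
  exact isCompact_iff_compactSpace.1 (h ▸ WeakDual.isCompact_closedBall (𝕜 := ℝ) 0 1)

lemma dualBall_ext {z z' : dualBall X} (h : ∀ x, z.1 x = z'.1 x) : z = z' :=
  Subtype.ext (DFunLike.ext _ _ h)

lemma continuous_dualBall_apply (x : X) : Continuous fun z : dualBall X => z.1 x :=
  (WeakDual.eval_continuous x).comp continuous_subtype_val

lemma continuous_dualBall {α : Type*} [TopologicalSpace α] {g : α → dualBall X}
    (h : ∀ x, Continuous fun a => (g a).1 x) : Continuous g :=
  Continuous.subtype_mk (WeakDual.continuous_of_continuous_eval h) _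

lemma tendsto_dualBall_iff {α : Type*} {l : Filter α} {g : α → dualBall X} {z : dualBall X} :
    Tendsto g l (𝓝 z) ↔ ∀ x, Tendsto (fun a => (g a).1 x) l (𝓝 (z.1 x)) :=
  tendsto_subtype_rng.trans tendsto_iff_forall_eval_tendsto_topDualPairing

/-- The element of the dual ball given by a linear functional of norm at most one. -/
noncomputable def dualBallMk (φ : X →ₗ[ℝ] ℝ) (h : ∀ x, |φ x| ≤ ‖x‖) : dualBall X :=
  ⟨StrongDual.toWeakDual (φ.mkContinuous 1 fun x => by simpa using h x), h⟩

/-- The adjoint of an operator of norm at most one, as a map between dual balls. -/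
noncomputable def dualBallAdjoint {X' : Type*} [NormedAddCommGroup X'] [NormedSpace ℝ X']
    (T : X →L[ℝ] X') (hT : ‖T‖ ≤ 1) : C(dualBall X', dualBall X) where
  toFun z := dualBallMk ((WeakDual.toStrongDual z.1).toLinearMap ∘ₗ T.toLinearMap)
    fun x => (z.2 (T x)).trans (T.le_of_opNorm_le_of_le hT le_rfl |>.trans_eq (one_mul _))
  continuous_toFun := continuous_dualBall fun x => continuous_dualBall_apply (T x)

@[simp] lemma dualBallAdjoint_apply {X' : Type*} [NormedAddCommGroup X'] [NormedSpace ℝ X']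
    (T : X →L[ℝ] X') (hT : ‖T‖ ≤ 1) (z : dualBall X') (x : X) :
    (dualBallAdjoint T hT z).1 x = z.1 (T x) := rfl

/-- The homeomorphism of dual balls induced by a linear isometric equivalence. -/
noncomputable def dualBallHomeomorph {X' : Type*} [NormedAddCommGroup X'] [NormedSpace ℝ X']
    (e : X ≃ₗᵢ[ℝ] X') : dualBall X' ≃ₜ dualBall X where
  toFun := dualBallAdjoint e.toLinearIsometry.toContinuousLinearMap
    e.toLinearIsometry.norm_toContinuousLinearMap_le
  invFun := dualBallAdjoint e.symm.toLinearIsometry.toContinuousLinearMap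
    e.symm.toLinearIsometry.norm_toContinuousLinearMap_le
  left_inv z := dualBall_ext fun x => by simp
  right_inv z := dualBall_ext fun x => by simp
  continuous_toFun := map_continuous _
  continuous_invFun := map_continuous _

/-- The functionals in the dual ball which almost attain their norm at some element of `B`, with
error `1 / (n + 1)`. -/
def almostNorming (B : Set X) (n : ℕ) : Set (dualBall X) :=
  ⋃ w ∈ B, {y | 1 - 1 / ((n : ℝ) + 1) < y.1 w}

lemma isOpen_almostNorming (B : Set X) (n : ℕ) : IsOpen (almostNorming B n) :=
  isOpen_biUnion fun w _ => isOpen_lt continuous_const (continuous_dualBall_apply w)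

lemma mem_almostNorming {B : Set X} {w : X} (hw : w ∈ B) {y : dualBall X} (hy : y.1 w = 1) (n : ℕ) :
    y ∈ almostNorming B n :=
  mem_iUnion₂.2 ⟨w, hw, by simpa only [mem_ofPred_eq, hy, sub_lt_self_iff] using
    Nat.one_div_pos_of_nat⟩

lemma nonpos_of_forall_mem_closure_almostNorming {B : Set X} {z : dualBall X}
    (hz : ∀ n, z ∈ closure (almostNorming B n)) {g : dualBall X → ℝ} (hg : Continuous g) {C : ℝ}
    (hC : 0 ≤ C) (h : ∀ y, ∀ w ∈ B, g y ≤ C * (1 - y.1 w)) : g z ≤ 0 := by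
  have hn : ∀ n : ℕ, g z ≤ C * (1 / ((n : ℝ) + 1)) := fun n => by
    refine closure_minimal (iUnion₂_subset fun w hw y hy => ?_)
      (isClosed_le hg continuous_const) (hz n)
    have hyw : 1 - y.1 w ≤ 1 / ((n : ℝ) + 1) := by linarith [mem_ofPred_eq ▸ hy]
    exact (h y w hw).trans (mul_le_mul_of_nonneg_left hyw hC)
  simpa using ge_of_tendsto (tendsto_one_div_add_atTop_nhds_zero_nat.const_mul C)
    (Eventually.of_forall hn)

end DualBall

section Transport

variable {K L : Type u} [TopologicalSpace K] [TopologicalSpace L]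

/-- The retractional skeleton transported along a homeomorphism. -/
def RetractionalSkeleton.ofHomeomorph (𝔰 : RetractionalSkeleton K) (h : K ≃ₜ L) :
    RetractionalSkeleton L where
  Γ := 𝔰.Γ
  po := 𝔰.po
  ne := 𝔰.ne
  directed := 𝔰.directed
  r s := ⟨fun x => h (𝔰.r s (h.symm x)), by fun_prop⟩
  isRetraction s x := by simp [𝔰.isRetraction]
  metrizable s := by
    have := 𝔰.metrizable s
    have hrange : range (fun x => h (𝔰.r s (h.symm x))) = h '' range (𝔰.r s) := by
      rw [← range_comp, ← h.symm.surjective.range_comp (h ∘ 𝔰.r s)]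
      rfl
    have := (h.image (range (𝔰.r s))).symm.isEmbedding.metrizableSpace
    exact (Homeomorph.setCongr hrange).isEmbedding.metrizableSpace
  tendsto_id x := by
    simpa [Function.comp_def] using (h.continuous.tendsto _).comp (𝔰.tendsto_id (h.symm x))
  comp_eq_of_le s t hst x := by simp [𝔰.comp_eq_of_le s t hst]
  sup_seq f hf := by
    obtain ⟨t, ht, htx⟩ := 𝔰.sup_seq f hf
    exact ⟨t, ht, fun x => (h.continuous.tendsto _).comp (htx (h.symm x))⟩

lemma RetractionalSkeleton.mem_inducedSet_ofHomeomorph {𝔰 : RetractionalSkeleton K} {h : K ≃ₜ L}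
    {y : L} : y ∈ (𝔰.ofHomeomorph h).inducedSet ↔ h.symm y ∈ 𝔰.inducedSet := by
  rw [RetractionalSkeleton.mem_inducedSet_iff, RetractionalSkeleton.mem_inducedSet_iff]
  exact exists_congr fun s => h.toEquiv.eq_symm_apply.symm

lemma HasRetractionalSkeleton.of_homeomorph (h : K ≃ₜ L) (hK : HasRetractionalSkeleton K) :
    HasRetractionalSkeleton L :=
  hK.map fun 𝔰 => 𝔰.ofHomeomorph h

end Transport

/-! ### Evaluations on function spaces -/

section Eval

variable {L : Type u} [TopologicalSpace L] [CompactSpace L]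

/-- Condition (iii) of the theorem: the dual ball of each closed subspace of `C(L)` has a
retractional skeleton. -/
def HereditarilyHasRetractionalSkeleton (L : Type u) [TopologicalSpace L] [CompactSpace L] : Prop :=
  ∀ Y : Subspace ℝ C(L, ℝ), IsClosed (Y : Set C(L, ℝ)) → HasRetractionalSkeleton ↥(dualBall ↥Y)

/-- The isometric embedding of `C(L)` into `C(K)` given by composition with a surjection. -/
def compLinearIsometry {K : Type u} [TopologicalSpace K] [CompactSpace K] (π : C(K, L))
    (hπ : Function.Surjective π) : C(L, ℝ) →ₗᵢ[ℝ] C(K, ℝ) where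
  toFun f := f.comp π
  map_add' _ _ := rfl
  map_smul' _ _ := rfl
  norm_map' f := by
    refine le_antisymm ((ContinuousMap.norm_le _ (norm_nonneg _)).2 fun x =>
      f.norm_coe_le_norm (π x)) ((ContinuousMap.norm_le _ (norm_nonneg _)).2 fun y => ?_)
    obtain ⟨x, rfl⟩ := hπ y
    exact (f.comp π).norm_coe_le_norm x

lemma HereditarilyHasRetractionalSkeleton.of_surjective {K : Type u} [TopologicalSpace K]
    [CompactSpace K] (hK : HereditarilyHasRetractionalSkeleton K) (π : C(K, L))
    (hπ : Function.Surjective π) : HereditarilyHasRetractionalSkeleton L := by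
  intro Y hY
  let T := compLinearIsometry π hπ
  let E : Y ≃ₗᵢ[ℝ] Y.map T.toLinearMap :=
    { toLinearEquiv := Y.equivMapOfInjective T.toLinearMap T.injective
      norm_map' := fun y => T.norm_map y.1 }
  have hcl : IsClosed ((Y.map T.toLinearMap : Subspace ℝ C(K, ℝ)) : Set C(K, ℝ)) := by
    rw [Submodule.map_coe]
    exact T.isometry.isClosedEmbedding.isClosedMap _ hY
  exact (hK _ hcl).of_homeomorph (dualBallHomeomorph E)

variable (Y : Subspace ℝ C(L, ℝ))

/-- Evaluation at a point, as an element of the dual ball of a function space. -/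
noncomputable def evBall (x : L) : dualBall Y :=
  dualBallMk { toFun := fun f => f.1 x, map_add' := fun _ _ => rfl, map_smul' := fun _ _ => rfl }
    fun f => f.1.norm_coe_le_norm x

lemma continuous_evBall : Continuous (evBall Y) :=
  continuous_dualBall fun f => f.1.continuous

variable {Y}

lemma abs_dualBall_apply_le_sub {z : dualBall Y} {f h : Y} {c : ℝ} (hc : 0 ≤ c)
    (hfh : ∀ x, |f.1 x| + |h.1 x| ≤ c) : |z.1 h| ≤ c - z.1 f := by
  have hadd : ‖f + h‖ ≤ c := (ContinuousMap.norm_le _ hc).2 fun x =>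
    (abs_add_le (f.1 x) (h.1 x)).trans (hfh x)
  have hsub : ‖f - h‖ ≤ c := (ContinuousMap.norm_le _ hc).2 fun x =>
    (abs_sub (f.1 x) (h.1 x)).trans (hfh x)
  have hzadd := (le_abs_self _).trans ((z.2 (f + h)).trans hadd)
  have hzsub := (le_abs_self _).trans ((z.2 (f - h)).trans hsub)
  rw [map_add] at hzadd
  rw [map_sub] at hzsub
  exact abs_le.2 ⟨by linarith, by linarith⟩

lemma exists_forall_le_add_mul {g p : L → ℝ} (hg : Continuous g) (hp : Continuous p)
    (hp0 : ∀ x, 0 ≤ p x) (hgp : ∀ x, p x = 0 → g x ≤ 0) {δ : ℝ} (hδ : 0 < δ) :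
    ∃ M, 0 ≤ M ∧ ∀ x, g x ≤ δ + M * p x := by
  let U : ℕ → Set L := fun n => {x | g x < δ + n * p x}
  have hU : ∀ n, IsOpen (U n) := fun n => isOpen_lt hg (by fun_prop)
  have hmono : Monotone U := fun m n hmn x (hx : g x < δ + m * p x) =>
    hx.trans_le (by gcongr; exact hp0 x)
  have hcover : univ ⊆ ⋃ n, U n := fun x _ => by
    rcases (hp0 x).eq_or_lt' with hx | hx
    · exact mem_iUnion.2 ⟨0, by simpa [U] using (hgp x hx).trans_lt hδ⟩
    · obtain ⟨n, hn⟩ := exists_nat_gt (g x / p x)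
      exact mem_iUnion.2 ⟨n, ((div_lt_iff₀ hx).1 hn).trans (by linarith)⟩
  obtain ⟨n, hn⟩ := isCompact_univ.elim_directed_cover U hU hcover hmono.directed_le
  exact ⟨n, n.cast_nonneg, fun x => (show g x < _ from hn (mem_univ x)).le⟩

lemma dualBall_apply_eq_zero_of_norming {f h : Y} (hf : ‖f‖ ≤ 1) {z : dualBall Y}
    (hz : z.1 f = 1) (hh : ∀ x, |f.1 x| = 1 → h.1 x = 0) : z.1 h = 0 := by
  have hf1 : ∀ x, |f.1 x| ≤ 1 := fun x => (f.1.norm_coe_le_norm x).trans hf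
  refine abs_nonpos_iff.1 (le_of_forall_pos_le_add fun δ hδ => ?_)
  obtain ⟨M, hM, hle⟩ := exists_forall_le_add_mul (g := fun x => |h.1 x|)
    (p := fun x => 1 - |f.1 x|) h.1.continuous.abs (continuous_const.sub f.1.continuous.abs)
    (fun x => sub_nonneg.2 (hf1 x))
    (fun x hx => by rw [hh x (sub_eq_zero.1 hx).symm, abs_zero]) hδ
  have hzh : |z.1 h| ≤ (M + δ) - z.1 (M • f) := by
    refine abs_dualBall_apply_le_sub (by positivity) fun x => ?_
    have hMf : |(M • f).1 x| = M * |f.1 x| := by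
      rw [← abs_of_nonneg hM, ← abs_mul, abs_of_nonneg hM]; rfl
    linarith [hle x]
  rw [map_smul, hz, smul_eq_mul, mul_one] at hzh
  linarith

lemma dualBall_apply_eq_sum_of_norming {F : Finset L} {g : L → Y}
    (hg1 : ∀ x ∈ F, (g x).1 x = 1) (hg0 : ∀ x ∈ F, ∀ y ∈ F, x ≠ y → (g x).1 y = 0)
    {f : Y} (hf : ‖f‖ ≤ 1) (hfF : ∀ x, |f.1 x| = 1 → x ∈ F) {z : dualBall Y} (hz : z.1 f = 1)
    (h : Y) : z.1 h = ∑ x ∈ F, h.1 x * z.1 (g x) := by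
  have hzero : z.1 (h - ∑ x ∈ F, h.1 x • g x) = 0 := by
    refine dualBall_apply_eq_zero_of_norming hf hz fun y hy => ?_
    have hsum : (∑ x ∈ F, h.1 x • g x).1 y = h.1 y := by
      have hval : (∑ x ∈ F, h.1 x • g x).1 y = ∑ x ∈ F, h.1 x * (g x).1 y := by simp
      rw [hval, Finset.sum_eq_single_of_mem y (hfF y hy) fun x hx hxy => by
        rw [hg0 x hx y (hfF y hy) hxy, mul_zero], hg1 y (hfF y hy), mul_one]
    exact sub_eq_zero.2 hsum.symm
  simpa [sub_eq_zero] using hzero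

lemma isGδ_singleton_of_norming {F : Finset L} {g : L → Y}
    (hg1 : ∀ x ∈ F, (g x).1 x = 1) (hg0 : ∀ x ∈ F, ∀ y ∈ F, x ≠ y → (g x).1 y = 0)
    {f : Y} (hf : ‖f‖ ≤ 1) (hfF : ∀ x, |f.1 x| = 1 → x ∈ F) {z : dualBall Y} (hz : z.1 f = 1) :
    IsGδ {z} := by
  have heq : {z} = {y : dualBall Y | y.1 f = 1} ∩
      ⋂ x ∈ F, {y : dualBall Y | y.1 (g x) = z.1 (g x)} := by
    refine Subset.antisymm (singleton_subset_iff.2 ⟨hz, mem_iInter₂.2 fun _ _ => rfl⟩) ?_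
    rintro y ⟨hy, hyg⟩
    refine dualBall_ext fun h => ?_
    rw [dualBall_apply_eq_sum_of_norming hg1 hg0 hf hfF hy,
      dualBall_apply_eq_sum_of_norming hg1 hg0 hf hfF hz]
    exact Finset.sum_congr rfl fun x hx => congrArg _ (mem_iInter₂.1 hyg x hx)
  have hGδ : ∀ (h : Y) (c : ℝ), IsGδ {y : dualBall Y | y.1 h = c} := fun h c =>
    (IsGδ.singleton c).preimage (continuous_dualBall_apply h)
  exact heq ▸ (hGδ f 1).inter (.biInter F.countable_toSet fun x _ => hGδ _ _)

lemma isGδ_singleton_evBall {x : L} {f : Y} (hfx : f.1 x = 1) (hf : ∀ y, y ≠ x → |f.1 y| < 1) :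
    IsGδ {evBall Y x} := by
  have hnorm : ‖f‖ ≤ 1 := (ContinuousMap.norm_le _ zero_le_one).2 fun y => by
    rcases eq_or_ne y x with rfl | hy
    · exact (congrArg _ hfx).le.trans (by simp)
    · exact (hf y hy).le
  refine isGδ_singleton_of_norming (F := {x}) (g := fun _ => f) (by simpa using hfx)
    (by simp) hnorm (fun y hy => ?_) hfx
  by_contra hne
  exact (hf y (by simpa using hne)).ne hy

/-- The functions in `Y` with values in `[0, 1]` which vanish where `q` does not. -/
def bumpsOff (Y : Subspace ℝ C(L, ℝ)) (q : C(L, ℝ)) : Set Y :=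
  {w | (∀ x, w.1 x ∈ Icc 0 1) ∧ w.1 * q = 0}

lemma abs_dualBall_apply_mul_le {q f : C(L, ℝ)} (hq : ∀ x, q x ∈ Icc 0 1) (hqf : q * f ∈ Y)
    {w : Y} (hw : w ∈ bumpsOff Y q) (z : dualBall Y) :
    |z.1 ⟨q * f, hqf⟩| ≤ ‖f‖ * (1 - z.1 w) := by
  have hle : |z.1 ⟨q * f, hqf⟩| ≤ ‖f‖ - z.1 (‖f‖ • w) := by
    refine abs_dualBall_apply_le_sub (norm_nonneg _) fun x => ?_
    have hfx : |f x| ≤ ‖f‖ := f.norm_coe_le_norm x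
    have hwx := hw.1 x
    have hqx := hq x
    change |‖f‖ * w.1 x| + |q x * f x| ≤ ‖f‖
    rw [abs_mul, abs_mul, abs_norm, abs_of_nonneg hwx.1, abs_of_nonneg hqx.1]
    rcases mul_eq_zero.1 (DFunLike.congr_fun hw.2 x : w.1 x * q x = 0) with h | h
    · rw [h, mul_zero, zero_add]
      exact (mul_le_of_le_one_left (abs_nonneg _) hqx.2).trans hfx
    · rw [h, zero_mul, add_zero]
      exact mul_le_of_le_one_right (norm_nonneg _) hwx.2
  rw [map_smul, smul_eq_mul] at hle
  linarith

lemma one_sub_dualBall_apply_one_le (h1 : 1 ∈ Y) {w : Y} (hw : ∀ x, w.1 x ∈ Icc 0 1)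
    (z : dualBall Y) : 1 - z.1 ⟨1, h1⟩ ≤ 2 * (1 - z.1 w) := by
  have hle : |z.1 (⟨1, h1⟩ - w)| ≤ 1 - z.1 w := by
    refine abs_dualBall_apply_le_sub zero_le_one fun x => ?_
    change |w.1 x| + |1 - w.1 x| ≤ 1
    rw [abs_of_nonneg (hw x).1, abs_of_nonneg (sub_nonneg.2 (hw x).2)]
    linarith
  rw [map_sub] at hle
  linarith [(abs_le.1 hle).1]

/-- Functionals which almost attain their norm at bumps living off `q i`, for every `i`, vanish at
all `q i * f`; together with the value at `1` this determines them. -/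
lemma evBall_mem_inducedSet_of_partition (𝔰 : RetractionalSkeleton (dualBall Y)) {ι : Type*}
    [Fintype ι] {q : ι → C(L, ℝ)} (hq0 : ∀ i x, 0 ≤ q i x) (hq1 : ∑ i, q i = 1) {a : L}
    (h1 : 1 ∈ Y) (hqY : ∀ i, ∀ f ∈ Y, f a = 0 → q i * f ∈ Y)
    (ha : ∀ i, evBall Y a ∈ closure (evBall Y '' {x | ∃ w ∈ bumpsOff Y (q i), w.1 x = 1})) :
    evBall Y a ∈ 𝔰.inducedSet := by
  have hsum : ∀ x, ∑ i, q i x = 1 := fun x => by simpa using DFunLike.congr_fun hq1 x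
  have hq : ∀ i x, q i x ∈ Icc 0 1 := fun i x =>
    ⟨hq0 i x, hsum x ▸ Finset.single_le_sum (fun j _ => hq0 j x) (Finset.mem_univ i)⟩
  have hι : Nonempty ι := not_isEmpty_iff.1 fun _ => by simpa using hsum a
  refine 𝔰.mem_inducedSet_of_forall_mem_closure
    (V := fun p : ι × ℕ => almostNorming (bumpsOff Y (q p.1)) p.2)
    (fun p => isOpen_almostNorming _ _) (fun p => closure_mono ?_ (ha p.1)) fun z hz => ?_
  · rintro _ ⟨x, ⟨w, hw, hwx⟩, rfl⟩
    exact mem_almostNorming hw hwx p.2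
  have hcl : ∀ i n, z ∈ closure (almostNorming (bumpsOff Y (q i)) n) := fun i n => hz (i, n)
  have hz1 : z.1 ⟨1, h1⟩ = 1 := by
    have hnorm : ‖(⟨1, h1⟩ : Y)‖ ≤ 1 :=
      (ContinuousMap.norm_le (1 : C(L, ℝ)) zero_le_one).2 fun x => by simp
    refine le_antisymm ((le_abs_self _).trans ((z.2 _).trans hnorm)) (sub_nonpos.1 ?_)
    exact nonpos_of_forall_mem_closure_almostNorming (hcl hι.some)
      (g := fun y => 1 - y.1 ⟨1, h1⟩)
      (continuous_const.sub (continuous_dualBall_apply _)) zero_le_two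
      fun y w hw => one_sub_dualBall_apply_one_le h1 hw.1 y
  have hzq : ∀ i, ∀ f, ∀ hf : q i * f ∈ Y, z.1 ⟨q i * f, hf⟩ = 0 := fun i f hf =>
    abs_nonpos_iff.1 <| nonpos_of_forall_mem_closure_almostNorming (hcl i)
      (continuous_dualBall_apply _).abs (norm_nonneg f)
      fun y w hw => abs_dualBall_apply_mul_le (hq i) hf hw y
  have hz0 : ∀ f : Y, f.1 a = 0 → z.1 f = 0 := fun f hf => by
    have hf' : f = ∑ i, ⟨q i * f.1, hqY i f f.2 hf⟩ := Subtype.ext <| by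
      simp [← Finset.sum_mul, hq1]
    rw [hf', map_sum, Finset.sum_eq_zero fun i _ => hzq i _ _]
  refine dualBall_ext fun f => ?_
  have hfa := hz0 (f - f.1 a • ⟨1, h1⟩) (by simp)
  rwa [map_sub, map_smul, hz1, smul_eq_mul, mul_one, sub_eq_zero] at hfa

lemma evBall_mem_inducedSet_of_mem_closure (𝔰 : RetractionalSkeleton (dualBall Y)) {A : Set L}
    (hA : A.Countable) (hAD : MapsTo (evBall Y) A 𝔰.inducedSet) {x : L} (hx : x ∈ closure A) :
    evBall Y x ∈ 𝔰.inducedSet :=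
  𝔰.closure_subset_inducedSet (hA.image _) hAD.image_subset
    (image_closure_subset_closure_image (continuous_evBall Y) (mem_image_of_mem _ hx))

variable [T2Space L]

lemma evBall_notMem_closure_image {S J : Set L} (hS : IsClosed S)
    (hSY : ∀ f : C(L, ℝ), EqOn f 1 S → f ∈ Y) (hJS : Disjoint (closure J) S) {x : L}
    (hx : x ∈ S) : evBall Y x ∉ closure (evBall Y '' J) := fun hxJ => by
  obtain ⟨f, hfJ, hfS, -⟩ := exists_continuous_zero_one_of_isClosed isClosed_closure hS hJS
  have hJ0 : ∀ z ∈ evBall Y '' J, z.1 ⟨f, hSY f hfS⟩ = 0 :=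
    forall_mem_image.2 fun y hy => hfJ (subset_closure hy)
  have hx0 : f x = 0 := closure_minimal hJ0
    (isClosed_eq (continuous_dualBall_apply _) continuous_const) hxJ
  exact one_ne_zero ((hfS hx).symm.trans hx0)

lemma isGδ_singleton_evBall_of_isGδ {x : L} (hx : IsGδ {x}) {S : Set L} (hS : IsClosed S)
    (hxS : x ∉ S) (hSY : ∀ f : C(L, ℝ), EqOn f 0 S → f ∈ Y) : IsGδ {evBall Y x} := by
  obtain ⟨f, hfx, hfS, -, hf⟩ := exists_continuous_one_zero_of_isCompact_of_isGδ
    isCompact_singleton hx hS (disjoint_singleton_left.2 hxS)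
  have hf1 : ∀ y, f y = 1 ↔ y = x := fun y => (Set.ext_iff.1 hfx y).symm
  refine isGδ_singleton_evBall (f := ⟨f, hSY f hfS⟩) ((hf1 x).2 rfl) fun y hy => ?_
  rw [abs_of_nonneg (hf y).1]
  exact (hf y).2.lt_of_ne fun h => hy ((hf1 y).1 h)

end Eval

/-! ### Excluding copies of `[0, ω₁]` -/

/-- The ordinal `ω β + n`. -/
noncomputable def omegaMulAdd (β : Ordinal.{0}) (n : ℕ) : Ordinal.{0} := Ordinal.omega0 * β + n

section Ordinal

lemma omegaMulAdd_lt {β γ : Ordinal.{0}} (h : β < γ) (n m : ℕ) :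
    omegaMulAdd β n < omegaMulAdd γ m := by
  calc Ordinal.omega0 * β + n < Ordinal.omega0 * β + Ordinal.omega0 := by
        gcongr; exact Ordinal.natCast_lt_omega0 n
    _ = Ordinal.omega0 * Order.succ β := (Ordinal.mul_succ _ _).symm
    _ ≤ Ordinal.omega0 * γ := by gcongr; exact Order.succ_le_of_lt h
    _ ≤ _ := le_self_add

lemma omegaMulAdd_lt_iff {β γ : Ordinal.{0}} {n m : ℕ} :
    omegaMulAdd β n < omegaMulAdd γ m ↔ β < γ ∨ β = γ ∧ n < m := by
  rcases lt_trichotomy β γ with h | rfl | h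
  · simp [h, omegaMulAdd_lt h]
  · simp [omegaMulAdd]
  · simp [h.not_gt, h.ne', (omegaMulAdd_lt h m n).not_gt]

lemma omegaMulAdd_inj {β γ : Ordinal.{0}} {n m : ℕ} :
    omegaMulAdd β n = omegaMulAdd γ m ↔ β = γ ∧ n = m := by
  refine ⟨fun h => ?_, by rintro ⟨rfl, rfl⟩; rfl⟩
  have h₁ := omegaMulAdd_lt_iff.not.1 h.not_lt
  have h₂ := omegaMulAdd_lt_iff.not.1 h.not_gt
  grind

lemma isLUB_image_omegaMulAdd {α δ : Ordinal.{0}} (hδ : Order.IsSuccLimit δ) (hα : α < δ)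
    (n : Ordinal.{0} → ℕ) :
    IsLUB ((fun β => omegaMulAdd β (n β)) '' Ioo α δ) (omegaMulAdd δ 0) := by
  refine ⟨?_, fun x hx => le_of_not_gt fun hlt => ?_⟩
  · rintro _ ⟨β, hβ, rfl⟩
    exact (omegaMulAdd_lt hβ.2 _ _).le
  · rw [omegaMulAdd, Nat.cast_zero, add_zero, Ordinal.lt_mul_iff_of_isSuccLimit hδ] at hlt
    obtain ⟨β, hβ, hxβ⟩ := hlt
    have hmax : Order.succ (max α β) < δ := hδ.succ_lt (max_lt hα hβ)
    have hle := hx ⟨_, ⟨Order.lt_succ_of_le (le_max_left α β), hmax⟩, rfl⟩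
    have hβm := omegaMulAdd_lt (Order.lt_succ_of_le (le_max_right α β)) 0
      (n (Order.succ (max α β)))
    rw [omegaMulAdd, Nat.cast_zero, add_zero] at hβm
    exact (hxβ.trans hβm).not_ge hle

lemma omega0_lt_omega1 : Ordinal.omega0 < omega1 := by
  rw [omega1, Cardinal.ord_aleph]
  exact Ordinal.omega0_lt_omega_one

lemma isSuccLimit_omega1 : Order.IsSuccLimit omega1 := by
  rw [omega1]
  exact Cardinal.isSuccLimit_ord (Cardinal.aleph0_le_aleph 1)

lemma omega0_mul_omega1 : Ordinal.omega0 * omega1 = omega1 :=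
  Ordinal.isPrincipal_mul_iff_mul_left_eq.1
    (Ordinal.isPrincipal_mul_ord (Cardinal.aleph0_le_aleph 1)) _ Ordinal.omega0_pos omega0_lt_omega1

lemma omegaMulAdd_omega1_zero : omegaMulAdd omega1 0 = omega1 := by
  rw [omegaMulAdd, Nat.cast_zero, add_zero, omega0_mul_omega1]

lemma omegaMulAdd_lt_omega1 {β : Ordinal.{0}} (hβ : β < omega1) (n : ℕ) :
    omegaMulAdd β n < omega1 :=
  omegaMulAdd_omega1_zero ▸ omegaMulAdd_lt hβ n 0

lemma exists_forall_lt_omega1_of_countable {J : Set Ordinal.{0}} (hJ : J.Countable)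
    (h : ∀ β ∈ J, β < omega1) : ∃ γ < omega1, ∀ β ∈ J, β < γ := by
  have := hJ.to_subtype
  have hsup : ⨆ b : J, b.1 < omega1 := by
    rw [omega1, Cardinal.ord_aleph] at h ⊢
    exact Ordinal.iSup_lt_omega_one fun b => h b b.2
  exact ⟨_, isSuccLimit_omega1.succ_lt hsup, fun β hβ => Order.lt_succ_of_le
    (le_ciSup (f := fun b : J => b.1) Ordinal.bddAbove_of_small ⟨β, hβ⟩)⟩

lemma isClopen_Ioc_ordinal (α β : Ordinal.{0}) : IsClopen (Ioc α β) := by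
  refine ⟨?_, ?_⟩
  · rw [← Order.Icc_succ_left]
    exact isClosed_Icc
  · rw [← Order.Ioo_succ_right]
    exact isOpen_Ioo

lemma isCompact_Iic_ordinal (α : Ordinal.{0}) : IsCompact (Iic α) :=
  Icc_bot (a := α) ▸ isCompact_Icc

end Ordinal

lemma exists_continuousMap_comp_eq_indicator {α L : Type*} [TopologicalSpace α]
    [TopologicalSpace L] [T4Space L] {P : α → L} (hP : Continuous P) {S : Set α}
    (hS : IsCompact S) (hinj : InjOn P S) {A : Set α} (hA : IsClopen A) :
    ∃ f : C(L, ℝ), ∀ x ∈ S, f (P x) = A.indicator 1 x := by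
  have hclosed : ∀ B : Set α, IsClosed B → IsClosed (P '' (S ∩ B)) := fun B hB =>
    ((hS.inter_right hB).image hP).isClosed
  have hdisj : Disjoint (P '' (S ∩ Aᶜ)) (P '' (S ∩ A)) := by
    rw [disjoint_iff_inter_eq_empty, ← hinj.image_inter inter_subset_left inter_subset_left,
      ← inter_inter_distrib_left, compl_inter_self, inter_empty, image_empty]
  obtain ⟨f, hf0, hf1, -⟩ := exists_continuous_zero_one_of_isClosed (hclosed _ hA.compl.isClosed)
    (hclosed _ hA.isClosed) hdisj
  refine ⟨f, fun x hx => ?_⟩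
  by_cases hxA : x ∈ A
  · rw [indicator_of_mem hxA]
    exact hf1 (mem_image_of_mem P ⟨hx, hxA⟩)
  · rw [indicator_of_notMem hxA]
    exact hf0 (mem_image_of_mem P ⟨hx, hxA⟩)

section IdentifyingSubspace

variable {L : Type u} [TopologicalSpace L]

/-- The subspace of `C(L)` of the functions taking equal values at the two points of each pair
in `E`. -/
def identifyingSubspace (E : Set (L × L)) : Subspace ℝ C(L, ℝ) where
  carrier := {f | ∀ p ∈ E, f p.1 = f p.2}
  add_mem' hf hg p hp := congrArg₂ (· + ·) (hf p hp) (hg p hp)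
  zero_mem' _ _ := rfl
  smul_mem' c _ hf p hp := congrArg (c * ·) (hf p hp)

lemma mem_identifyingSubspace {E : Set (L × L)} {f : C(L, ℝ)} :
    f ∈ identifyingSubspace E ↔ ∀ p ∈ E, f p.1 = f p.2 := Iff.rfl

lemma isClosed_identifyingSubspace (E : Set (L × L)) :
    IsClosed (identifyingSubspace E : Set C(L, ℝ)) := by
  have heq : (identifyingSubspace E : Set C(L, ℝ)) = ⋂ p ∈ E, {f | f p.1 = f p.2} := by
    ext f
    simp [mem_identifyingSubspace]
  exact heq ▸ isClosed_biInter fun p _ => isClosed_eq (by fun_prop) (by fun_prop)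

end IdentifyingSubspace

section ClosedPair

variable {L : Type u} [TopologicalSpace L] [CompactSpace L] [T2Space L]

lemma exists_mem_bumpsOff {Y : Subspace ℝ C(L, ℝ)} {M : Set L} (hM : IsClosed M)
    (hMY : ∀ f : C(L, ℝ), EqOn f 0 M → f ∈ Y) {q : C(L, ℝ)} {x : L} (hxM : x ∉ M)
    (hx : q =ᶠ[𝓝 x] 0) : ∃ w ∈ bumpsOff Y q, w.1 x = 1 := by
  obtain ⟨w, hw0, hw1, hw⟩ := exists_continuous_zero_one_of_isClosed
    (hM.union (isClosed_tsupport q)) (isClosed_singleton (x := x))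
    (by simpa [hxM] using notMem_tsupport_iff_eventuallyEq.2 hx)
  refine ⟨⟨w, hMY w (hw0.mono subset_union_left)⟩, ⟨hw, ContinuousMap.ext fun y => ?_⟩, hw1 rfl⟩
  by_cases hy : y ∈ tsupport q
  · exact mul_eq_zero_of_left (hw0 (Or.inr hy)) _
  · exact mul_eq_zero_of_right _ (image_eq_zero_of_notMem_tsupport hy)

lemma evBall_mem_closure_bumpsOff {Y : Subspace ℝ C(L, ℝ)} {M : Set L} (hM : IsClosed M)
    (hMY : ∀ f : C(L, ℝ), EqOn f 0 M → f ∈ Y) {q : C(L, ℝ)} {a : L} (ha : (𝓝[≠] a).NeBot)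
    (hMa : IsClosed (M \ {a})) (hq : q =ᶠ[𝓝 a] 0) :
    evBall Y a ∈ closure (evBall Y '' {x | ∃ w ∈ bumpsOff Y q, w.1 x = 1}) := by
  refine image_closure_subset_closure_image (continuous_evBall Y) (mem_image_of_mem _ ?_)
  refine mem_closure_iff_frequently.2 (Eventually.frequently ?_ |>.filter_mono
    (nhdsWithin_le_nhds (s := {a}ᶜ)))
  filter_upwards [nhdsWithin_le_nhds (hMa.isOpen_compl.mem_nhds (x := a) (by simp)),
    nhdsWithin_le_nhds hq.eventually_nhds, self_mem_nhdsWithin] with x hxMa hqx hxa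
  exact exists_mem_bumpsOff hM hMY (fun hxM => hxMa ⟨hxM, hxa⟩) hqx

lemma evBall_mem_inducedSet_of_closed_pair {Y : Subspace ℝ C(L, ℝ)}
    (𝔰 : RetractionalSkeleton (dualBall Y)) {M : Set L} (hM : IsClosed M)
    (hMY : ∀ f : C(L, ℝ), EqOn f 0 M → f ∈ Y) (h1 : 1 ∈ Y) {a b : L} (hbM : b ∈ M) (hne : a ≠ b)
    (hab : ∀ f ∈ Y, f a = f b) (ha : (𝓝[≠] a).NeBot) (hMa : IsClosed (M \ {a}))
    (hb : (𝓝[≠] b).NeBot) (hMb : IsClosed (M \ {b})) : evBall Y a ∈ 𝔰.inducedSet := by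
  obtain ⟨C, haC, hC, hCM⟩ :=
    exists_mem_nhds_isClosed_subset (hMa.isOpen_compl.mem_nhds (x := a) (by simp))
  obtain ⟨v, hvM, hvC, hv⟩ := exists_tsupport_one_of_isOpen_isClosed hMa.isOpen_compl
    isClosed_closure.isCompact hC hCM
  have hv0 : ∀ x ∈ M \ {a}, x ∉ tsupport v := fun x hx hxv => hvM hxv hx
  have hvY : ∀ f ∈ Y, f a = 0 → v * f ∈ Y := fun f _ hf => hMY _ fun x hx => by
    by_cases hxa : x = a
    · exact mul_eq_zero_of_right _ (hxa ▸ hf)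
    · exact mul_eq_zero_of_left (image_eq_zero_of_notMem_tsupport (hv0 x ⟨hx, hxa⟩)) _
  refine evBall_mem_inducedSet_of_partition 𝔰 (q := fun i : Bool => cond i (1 - v) v)
    (fun i x => ?_) (by simp) h1 (fun i f hf hfa => ?_) fun i => ?_
  · cases i
    exacts [(hv x).1, sub_nonneg.2 (hv x).2]
  · cases i
    · exact hvY f hf hfa
    · simpa only [cond_true, sub_mul, one_mul] using Y.sub_mem hf (hvY f hf hfa)
  · cases i
    · have heq : evBall Y a = evBall Y b := dualBall_ext fun f => hab f.1 f.2
      exact heq ▸ evBall_mem_closure_bumpsOff hM hMY hb hMb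
        (notMem_tsupport_iff_eventuallyEq.1 (hv0 b ⟨hbM, hne.symm⟩))
    · refine evBall_mem_closure_bumpsOff hM hMY ha hMa ?_
      filter_upwards [haC] with x hx
      exact sub_eq_zero.2 (hvC hx).symm

end ClosedPair

section Omega1

variable {L : Type u} [TopologicalSpace L]

/-- The subspace of `C(L)` of the functions which, for a copy `P` of `[0, ω₁]` in `L`, identify
`P (ω²)` with `P ω₁`, and `P (ω β + 1)` with `P (ω β + 2)` for each `β < ω₁` for which these are
not isolated points of `L`. -/
def omega1Subspace (P : Ordinal.{0} → L) : Subspace ℝ C(L, ℝ) :=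
  identifyingSubspace (insert (P (omegaMulAdd Ordinal.omega0 0), P omega1)
    {p | ∃ β < omega1, p = (P (omegaMulAdd β 1), P (omegaMulAdd β 2)) ∧
      (𝓝[≠] p.1).NeBot ∧ (𝓝[≠] p.2).NeBot})

lemma mem_omega1Subspace {P : Ordinal.{0} → L} {f : C(L, ℝ)} :
    f ∈ omega1Subspace P ↔ f (P (omegaMulAdd Ordinal.omega0 0)) = f (P omega1) ∧
      ∀ β < omega1, (𝓝[≠] (P (omegaMulAdd β 1))).NeBot → (𝓝[≠] (P (omegaMulAdd β 2))).NeBot →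
        f (P (omegaMulAdd β 1)) = f (P (omegaMulAdd β 2)) := by
  rw [omega1Subspace, mem_identifyingSubspace, forall_mem_insert]
  refine and_congr_right fun _ => ⟨fun h β hβ h₁ h₂ => h _ ⟨β, hβ, rfl, h₁, h₂⟩, ?_⟩
  rintro h _ ⟨β, hβ, rfl, h₁, h₂⟩
  exact h β hβ h₁ h₂

lemma mem_omega1Subspace_of_eqOn {P : Ordinal.{0} → L} {f : C(L, ℝ)}
    (hf : EqOn f 0 (P '' Iic omega1)) : f ∈ omega1Subspace P := by
  have hf' : ∀ α ≤ omega1, f (P α) = 0 := fun α hα => hf (mem_image_of_mem P hα)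
  have hlt : ∀ β < omega1, ∀ n, omegaMulAdd β n ≤ omega1 := fun β hβ n =>
    (omegaMulAdd_lt_omega1 hβ n).le
  refine mem_omega1Subspace.2 ⟨?_, fun β hβ _ _ => ?_⟩
  · rw [hf' _ (hlt _ omega0_lt_omega1 0), hf' _ le_rfl]
  · rw [hf' _ (hlt β hβ 1), hf' _ (hlt β hβ 2)]

variable {P : Ordinal.{0} → L} (hinj : InjOn P (Iic omega1))

include hinj in
lemma mem_omega1Subspace_of_isolated {β : Ordinal.{0}} (hβ : β < omega1) {n : ℕ} (hn : 0 < n)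
    (hisol : ¬((𝓝[≠] (P (omegaMulAdd β 1))).NeBot ∧ (𝓝[≠] (P (omegaMulAdd β 2))).NeBot))
    {f : C(L, ℝ)} (hf : ∀ y ≠ P (omegaMulAdd β n), f y = 0) : f ∈ omega1Subspace P := by
  have hf' : ∀ α ≤ omega1, α ≠ omegaMulAdd β n → f (P α) = 0 := fun α hα hne =>
    hf _ fun h => hne (hinj hα (omegaMulAdd_lt_omega1 hβ n).le h)
  refine mem_omega1Subspace.2 ⟨?_, fun γ hγ h₁ h₂ => ?_⟩
  · rw [hf' _ (omegaMulAdd_lt_omega1 omega0_lt_omega1 0).le fun h => hn.ne (omegaMulAdd_inj.1 h).2,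
      hf' _ le_rfl (omegaMulAdd_lt_omega1 hβ n).ne']
  · have hne : γ ≠ β := by
      rintro rfl
      exact hisol ⟨h₁, h₂⟩
    have hz : ∀ m, f (P (omegaMulAdd γ m)) = 0 := fun m =>
      hf' _ (omegaMulAdd_lt_omega1 hγ m).le fun h => hne (omegaMulAdd_inj.1 h).1
    rw [hz, hz]

variable (hP : Continuous P)

include hP hinj in
lemma isClosed_image_Iic_diff_singleton [T2Space L] {α : Ordinal.{0}} (hα : α ≤ omega1)
    (hlim : ¬Order.IsSuccLimit α) : IsClosed (P '' Iic omega1 \ {P α}) := by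
  rw [← image_singleton, ← hinj.image_sdiff_subset (singleton_subset_iff.2 hα)]
  exact (((isCompact_Iic_ordinal omega1).diff (SuccOrder.isOpen_singleton_iff.2 hlim)).image
    hP).isClosed

variable [CompactSpace L]

include hP hinj in
lemma exists_evBall_omegaMulAdd_mem_inducedSet [T2Space L]
    (𝔰 : RetractionalSkeleton (dualBall (omega1Subspace P))) {β : Ordinal.{0}} (hβ : β < omega1) :
    ∃ n > 0, evBall (omega1Subspace P) (P (omegaMulAdd β n)) ∈ 𝔰.inducedSet := by
  have hle : ∀ n, omegaMulAdd β n ≤ omega1 := fun n => (omegaMulAdd_lt_omega1 hβ n).le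
  by_cases h : (𝓝[≠] (P (omegaMulAdd β 1))).NeBot ∧ (𝓝[≠] (P (omegaMulAdd β 2))).NeBot
  · have hlim : ∀ n, ¬Order.IsSuccLimit (omegaMulAdd β (n + 1)) := fun n => by
      rw [omegaMulAdd, Nat.cast_succ, ← add_assoc]
      exact Order.not_isSuccLimit_add_one _
    have hne : P (omegaMulAdd β 1) ≠ P (omegaMulAdd β 2) := fun heq =>
      absurd (omegaMulAdd_inj.1 (hinj (hle 1) (hle 2) heq)).2 (by norm_num)
    exact ⟨1, one_pos, evBall_mem_inducedSet_of_closed_pair 𝔰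
      ((isCompact_Iic_ordinal omega1).image hP).isClosed (fun f => mem_omega1Subspace_of_eqOn)
      (mem_omega1Subspace.2 ⟨rfl, fun _ _ _ _ => rfl⟩) (mem_image_of_mem P (hle 2)) hne
      (fun f hf => (mem_omega1Subspace.1 hf).2 β hβ h.1 h.2)
      h.1 (isClosed_image_Iic_diff_singleton hinj hP (hle 1) (hlim 0))
      h.2 (isClosed_image_Iic_diff_singleton hinj hP (hle 2) (hlim 1))⟩
  · have hisol : ∀ n > 0, ¬(𝓝[≠] (P (omegaMulAdd β n))).NeBot →
        evBall (omega1Subspace P) (P (omegaMulAdd β n)) ∈ 𝔰.inducedSet := fun n hn hbot => by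
      have hopen := (isOpen_singleton_iff_punctured_nhds _).2 (not_neBot.1 hbot)
      exact 𝔰.mem_inducedSet_of_isGδ_singleton (isGδ_singleton_evBall_of_isGδ hopen.isGδ
        hopen.isClosed_compl (not_not.2 rfl) fun f => mem_omega1Subspace_of_isolated hinj hβ hn h)
    rcases not_and_or.1 h with h | h
    exacts [⟨1, one_pos, hisol 1 one_pos h⟩, ⟨2, two_pos, hisol 2 two_pos h⟩]

include hP in
lemma evBall_omega1_mem_inducedSet {𝔰 : RetractionalSkeleton (dualBall (omega1Subspace P))}
    {n : Ordinal.{0} → ℕ}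
    (hn : ∀ β < omega1, evBall (omega1Subspace P) (P (omegaMulAdd β (n β))) ∈ 𝔰.inducedSet) :
    evBall (omega1Subspace P) (P omega1) ∈ 𝔰.inducedSet := by
  have heq : evBall (omega1Subspace P) (P (omegaMulAdd Ordinal.omega0 0)) =
      evBall (omega1Subspace P) (P omega1) :=
    dualBall_ext fun f => (mem_omega1Subspace.1 f.2).1
  have hcount : (Ioo 0 Ordinal.omega0).Countable := by
    refine (countable_range ((↑) : ℕ → Ordinal.{0})).mono fun β hβ => ?_
    obtain ⟨k, rfl⟩ := Ordinal.lt_omega0.1 hβ.2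
    exact mem_range_self k
  have hlub := isLUB_image_omegaMulAdd Ordinal.isSuccLimit_omega0 Ordinal.omega0_pos n
  have hne : (Ioo 0 Ordinal.omega0).Nonempty := ⟨1, one_pos, Ordinal.one_lt_omega0⟩
  refine heq ▸ evBall_mem_inducedSet_of_mem_closure 𝔰 ((hcount.image _).image P) ?_
    (image_closure_subset_closure_image hP (mem_image_of_mem P (hlub.mem_closure (hne.image _))))
  rintro _ ⟨_, ⟨β, hβ, rfl⟩, rfl⟩
  exact hn β (hβ.2.trans omega0_lt_omega1)

include hP in
lemma evBall_omega1_mem_closure (n : Ordinal.{0} → ℕ) :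
    evBall (omega1Subspace P) (P omega1) ∈
      closure ((fun β => evBall (omega1Subspace P) (P (omegaMulAdd β (n β)))) ''
        Ioo Ordinal.omega0 omega1) := by
  have hlub := isLUB_image_omegaMulAdd isSuccLimit_omega1 omega0_lt_omega1 n
  have hne : (Ioo Ordinal.omega0 omega1).Nonempty :=
    ⟨_, Order.lt_succ _, isSuccLimit_omega1.succ_lt omega0_lt_omega1⟩
  have hcl := image_closure_subset_closure_image ((continuous_evBall (omega1Subspace P)).comp hP)
    (mem_image_of_mem _ (hlub.mem_closure (hne.image _)))
  rwa [omegaMulAdd_omega1_zero, image_image] at hcl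

include hP hinj in
lemma exists_mem_omega1Subspace_separating [T2Space L] {γ : Ordinal.{0}} (hγ : γ < omega1) :
    ∃ f ∈ omega1Subspace P, f (P omega1) = 0 ∧
      ∀ β ∈ Ioo Ordinal.omega0 γ, ∀ n, f (P (omegaMulAdd β n)) = 1 := by
  obtain ⟨f, hf⟩ := exists_continuousMap_comp_eq_indicator hP (isCompact_Iic_ordinal omega1) hinj
    (isClopen_Ioc_ordinal (omegaMulAdd Ordinal.omega0 0) (omegaMulAdd γ 0))
  have hω : f (P omega1) = 0 := by
    rw [hf _ self_mem_Iic, indicator_of_notMem]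
    exact fun h => (omegaMulAdd_lt_omega1 hγ 0).not_ge h.2
  have hmem : ∀ {β n}, 0 < n → (omegaMulAdd β n ∈ Ioc (omegaMulAdd Ordinal.omega0 0)
      (omegaMulAdd γ 0) ↔ β ∈ Ico Ordinal.omega0 γ) := fun {β n} hn => by
    rw [mem_Ioc, mem_Ico, ← not_lt, omegaMulAdd_lt_iff, omegaMulAdd_lt_iff, le_iff_lt_or_eq]
    grind
  refine ⟨f, mem_omega1Subspace.2 ⟨?_, fun β hβ _ _ => ?_⟩, hω, fun β hβ n => ?_⟩
  · rw [hω, hf _ (omegaMulAdd_lt_omega1 omega0_lt_omega1 0).le,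
      indicator_of_notMem fun h => lt_irrefl _ h.1]
  · rw [hf _ (omegaMulAdd_lt_omega1 hβ 1).le, hf _ (omegaMulAdd_lt_omega1 hβ 2).le]
    simp only [indicator, hmem one_pos, hmem two_pos, Pi.one_apply]
  · rw [hf _ (omegaMulAdd_lt_omega1 (hβ.2.trans hγ) n).le, indicator_of_mem, Pi.one_apply]
    exact ⟨omegaMulAdd_lt hβ.1 0 n, (omegaMulAdd_lt hβ.2 n 0).le⟩

include hP hinj in
/-- The evaluation at `ω₁` lies in the induced set, and in the closure of evaluations at
points `ω β + n`, but in no closure of countably many of them: this contradicts countable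
tightness. -/
lemma not_hasRetractionalSkeleton_omega1Subspace [T2Space L] :
    ¬HasRetractionalSkeleton (dualBall (omega1Subspace P)) := by
  rintro ⟨𝔰⟩
  choose! n _ hn using fun (β : Ordinal.{0}) (hβ : β < omega1) =>
    exists_evBall_omegaMulAdd_mem_inducedSet hinj hP 𝔰 hβ
  obtain ⟨J, hJ, hJc, hωJ⟩ := 𝔰.exists_countable_mem_closure_image (fun β hβ => hn β hβ.2)
    (evBall_omega1_mem_inducedSet hP hn) (evBall_omega1_mem_closure hP n)
  obtain ⟨γ, hγ, hJγ⟩ := exists_forall_lt_omega1_of_countable hJc fun β hβ => (hJ hβ).2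
  obtain ⟨f, hfY, hf0, hf1⟩ := exists_mem_omega1Subspace_separating hinj hP hγ
  have hJ1 : ∀ z ∈ (fun β => evBall (omega1Subspace P) (P (omegaMulAdd β (n β)))) '' J,
      z.1 ⟨f, hfY⟩ = 1 :=
    forall_mem_image.2 fun β hβ => hf1 β ⟨(hJ hβ).1, hJγ β hβ⟩ (n β)
  have h1 : f (P omega1) = 1 := closure_minimal hJ1
    (isClosed_eq (continuous_dualBall_apply _) continuous_const) hωJ
  exact zero_ne_one (hf0.symm.trans h1)

theorem HereditarilyHasRetractionalSkeleton.not_isEmbedding [T2Space L]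
    (hL : HereditarilyHasRetractionalSkeleton L) (φ : OrdinalSegmentOmega1 → L) :
    ¬IsEmbedding φ := fun hφ => by
  refine not_hasRetractionalSkeleton_omega1Subspace
    (P := fun α => φ ⟨min α omega1, mem_Iic.2 (min_le_right _ _)⟩) ?_
    (hφ.continuous.comp (Continuous.subtype_mk (by fun_prop) _))
    (hL _ (isClosed_identifyingSubspace _))
  intro α hα β hβ h
  have heq := congrArg Subtype.val (hφ.injective h)
  simpa only [min_eq_left (mem_Iic.1 hα), min_eq_left (mem_Iic.1 hβ)] using heq

end Omega1

/-! ### Density of the `Gδ` points and Corson compactness -/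

/-- The set of `Gδ` points of `K`. -/
def gdeltaPoints (K : Type u) [TopologicalSpace K] : Set K := {x | IsGδ {x}}

lemma exists_continuousMap_onePoint_surjective {K : Type u} [TopologicalSpace K] [T2Space K]
    {U : Set K} (hU : IsOpen U) (hne : Uᶜ.Nonempty) :
    ∃ π : C(K, OnePoint U), Function.Surjective π := by
  classical
  let π : K → OnePoint U := fun x =>
    if h : x ∈ U then ((⟨x, h⟩ : U) : OnePoint U) else OnePoint.infty
  have hπ : ∀ x : U, π x = (x : OnePoint U) := fun x => dif_pos x.2
  have hpre : ∀ s : Set (OnePoint U), OnePoint.infty ∉ s →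
      π ⁻¹' s = Subtype.val '' (((↑) : U → OnePoint U) ⁻¹' s) := fun s hs => by
    ext x
    by_cases hx : x ∈ U <;> simp [π, hx, hs]
  have hcont : Continuous π := by
    refine continuous_def.2 fun s hs => ?_
    by_cases hi : OnePoint.infty ∈ s
    · have hi' : OnePoint.infty ∉ sᶜ := not_not.2 hi
      have hcomp := ((OnePoint.isClosed_iff_of_notMem hi').1 hs.isClosed_compl).2
      rw [← isClosed_compl_iff, ← preimage_compl, hpre _ hi']
      exact (hcomp.image continuous_subtype_val).isClosed
    · rw [hpre s hi]
      exact hU.isOpenMap_subtype_val _ (hs.preimage OnePoint.continuous_coe)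
  refine ⟨⟨π, hcont⟩, fun y => ?_⟩
  induction y using OnePoint.rec with
  | infty => exact hne.imp fun x hx => dif_neg hx
  | coe x => exact ⟨x, hπ x⟩

lemma exists_countable_subset_mem_closure_sdiff {K : Type u} [TopologicalSpace K] [CompactSpace K]
    {S : Set K} (hS : S.Infinite) : ∃ E ⊆ S, E.Countable ∧ ∃ b, b ∈ closure (E \ {b}) := by
  have hinj : Function.Injective fun n => (hS.natEmbedding S n : K) :=
    Subtype.val_injective.comp (hS.natEmbedding S).injective
  obtain ⟨b, hb⟩ := (infinite_range_of_injective hinj).exists_accPt_principal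
  rw [accPt_principal_iff_clusterPt, ← mem_closure_iff_clusterPt] at hb
  exact ⟨_, range_subset_iff.2 fun n => (hS.natEmbedding S n).2, countable_range _, b, hb⟩

namespace HereditarilyHasRetractionalSkeleton

variable {K : Type u} [TopologicalSpace K] [CompactSpace K] [T2Space K]

theorem dense_gdeltaPoints (hH : HereditarilyHasRetractionalSkeleton K) (hK : InClassG0 K) :
    Dense (gdeltaPoints K) := by
  rw [dense_iff_closure_eq]
  by_contra hne
  set U : Set K := (closure (gdeltaPoints K))ᶜ
  have hU : IsOpen U := isClosed_closure.isOpen_compl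
  obtain ⟨p, hp⟩ : U.Nonempty := nonempty_compl.2 hne
  have hUG : ∀ x ∈ U, ¬IsGδ {x} := fun x hx h => hx (subset_closure h)
  have hU' : IsOpen (U \ {p}) := hU.sdiff isClosed_singleton
  have hU'ne : (U \ {p}).Nonempty := by
    by_contra hempty
    rw [not_nonempty_iff_eq_empty, sdiff_eq_empty] at hempty
    exact hUG p hp ((hempty.antisymm (singleton_subset_iff.2 hp)) ▸ hU.isGδ)
  obtain ⟨φ, hφ⟩ := hK _ hU' hU'ne fun x hx => hUG x hx.1
  have : LocallyCompactSpace ↥(U \ {p}) := hU'.locallyCompactSpace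
  obtain ⟨π, hπ⟩ := exists_continuousMap_onePoint_surjective hU' ⟨p, fun h => h.2 rfl⟩
  exact (hH.of_surjective π hπ).not_isEmbedding φ hφ

lemma exists_countable_gdeltaPoints_mem_closure (hH : HereditarilyHasRetractionalSkeleton K)
    (hG : Dense (gdeltaPoints K)) (x : K) :
    ∃ C ⊆ gdeltaPoints K, C.Countable ∧ x ∈ closure C := by
  by_cases hxG : x ∈ gdeltaPoints K
  · exact ⟨{x}, singleton_subset_iff.2 hxG, countable_singleton x, subset_closure rfl⟩
  have hinf : (gdeltaPoints K).Infinite := fun hfin =>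
    hxG (hfin.isClosed.closure_eq ▸ hG x)
  obtain ⟨E, hEG, hE, b, hb⟩ := exists_countable_subset_mem_closure_sdiff hinf
  by_cases hxb : x = b
  · exact ⟨E, hEG, hE, hxb ▸ closure_mono sdiff_subset hb⟩
  obtain ⟨𝔰⟩ := hH (identifyingSubspace {(x, b)}) (isClosed_identifyingSubspace _)
  set Y := identifyingSubspace {(x, b)}
  have hYmem : ∀ {c : C(K, ℝ)} {f : C(K, ℝ)}, EqOn f c {x, b} → c x = c b → f ∈ Y :=
    fun hf hc => mem_identifyingSubspace.2 fun p hp => by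
      rw [hp, hf (mem_insert _ _), hf (mem_insert_of_mem _ rfl), hc]
  have hclosed : IsClosed {x, b} := (toFinite _).isClosed
  have hGD : ∀ y ∈ gdeltaPoints K, y ≠ b → evBall Y y ∈ 𝔰.inducedSet := fun y hy hyb =>
    𝔰.mem_inducedSet_of_isGδ_singleton <| isGδ_singleton_evBall_of_isGδ hy hclosed
      (by rintro (rfl | rfl); exacts [hxG hy, hyb rfl]) fun f hf => hYmem (c := 0) hf rfl
  have hxD : evBall Y x ∈ 𝔰.inducedSet := by
    have heq : evBall Y x = evBall Y b :=
      dualBall_ext fun f => mem_identifyingSubspace.1 f.2 _ rfl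
    exact heq ▸ evBall_mem_inducedSet_of_mem_closure 𝔰 (hE.mono sdiff_subset)
      (fun y hy => hGD y (hEG hy.1) hy.2) hb
  obtain ⟨U, V, hU, hV, hxU, hbV, hUV⟩ := t2_separation hxb
  have hbU : b ∉ closure U := fun h => (hUV.closure_left hV).le_bot ⟨h, hbV⟩
  obtain ⟨J, hJ, hJc, hxJ⟩ := 𝔰.exists_countable_mem_closure_image (S := U ∩ gdeltaPoints K)
    (fun y hy => hGD y hy.2 fun h => hbU (subset_closure (h ▸ hy.1))) hxD
    (image_closure_subset_closure_image (continuous_evBall Y)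
      (mem_image_of_mem _ (hG.open_subset_closure_inter hU hxU)))
  refine ⟨J, fun y hy => (hJ hy).2, hJc, by_contra fun hxJ' => ?_⟩
  have hbJ : b ∉ closure J := fun h => hbU (closure_mono (fun y hy => (hJ hy).1) h)
  refine evBall_notMem_closure_image hclosed (fun f hf => hYmem (c := 1) hf rfl) ?_
    (mem_insert x {b}) hxJ
  exact disjoint_right.2 (by rintro _ (rfl | rfl); exacts [hxJ', hbJ])

theorem exists_inducedSet_eq_univ (hH : HereditarilyHasRetractionalSkeleton K)
    (hG : Dense (gdeltaPoints K)) : ∃ 𝔱 : RetractionalSkeleton K, 𝔱.inducedSet = univ := by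
  obtain ⟨𝔰⟩ := hH ⊤ isClosed_univ
  have hrange : range (evBall (⊤ : Subspace ℝ C(K, ℝ))) ⊆ 𝔰.inducedSet := by
    rintro _ ⟨x, rfl⟩
    obtain ⟨C, hCG, hC, hx⟩ := hH.exists_countable_gdeltaPoints_mem_closure hG x
    exact evBall_mem_inducedSet_of_mem_closure 𝔰 hC (fun y hy =>
      𝔰.mem_inducedSet_of_isGδ_singleton <| isGδ_singleton_evBall_of_isGδ (hCG hy) isClosed_empty
        (notMem_empty y) fun _ _ => trivial) hx
  have hinj : Function.Injective (evBall (⊤ : Subspace ℝ C(K, ℝ))) := fun x y hxy => by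
    by_contra hne
    have hdisj : Disjoint (closure {y}) {x} := by simpa using Ne.symm hne
    have hy := evBall_notMem_closure_image (Y := ⊤) (isClosed_singleton (x := x))
      (fun _ _ => trivial) hdisj rfl
    exact hy (subset_closure (hxy ▸ mem_image_of_mem _ rfl))
  have hemb := (continuous_evBall (⊤ : Subspace ℝ C(K, ℝ))).isClosedEmbedding hinj
  obtain ⟨𝔱, h𝔱⟩ := 𝔰.exists_inducedSet_eq_univ_of_isClosed hemb.isClosed_range hrange
  refine ⟨𝔱.ofHomeomorph hemb.isEmbedding.toHomeomorph.symm, eq_univ_of_forall fun x => ?_⟩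
  rw [RetractionalSkeleton.mem_inducedSet_ofHomeomorph, h𝔱]
  exact mem_univ _

end HereditarilyHasRetractionalSkeleton

/-! ### Property (M) -/

section ConvexCombinations

variable {K : Type u} [TopologicalSpace K]

/-- Evaluation at a point, as an element of the weak* dual of `C(K)`. -/
noncomputable def evalDual (x : K) : WeakDual ℝ C(K, ℝ) :=
  StrongDual.toWeakDual (ContinuousMap.evalCLM ℝ x)

lemma apply_eq_of_mem_convexHull_evalDual {E : Set K} {ψ : WeakDual ℝ C(K, ℝ)}
    (hψ : ψ ∈ convexHull ℝ (evalDual '' E)) {f : C(K, ℝ)} {a : ℝ} (hf : ∀ x ∈ E, f x = a) :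
    ψ f = a := by
  have hE : evalDual '' E ⊆ {ψ | ψ f = a} := forall_mem_image.2 hf
  refine convexHull_min hE (fun ψ hψ ψ' hψ' s t _ _ hst => ?_) hψ
  change s * ψ f + t * ψ' f = a
  rw [hψ, hψ', ← add_mul, hst, one_mul]

lemma exists_finset_mem_convexHull_evalDual {D : Set K} {ψ : WeakDual ℝ C(K, ℝ)}
    (hψ : ψ ∈ convexHull ℝ (evalDual '' D)) :
    ∃ F : Finset K, ↑F ⊆ D ∧ ψ ∈ convexHull ℝ (evalDual '' (F : Set K)) := by
  classical
  rw [convexHull_eq_union_convexHull_finite_subsets] at hψ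
  obtain ⟨t, ht, hψt⟩ := mem_iUnion₂.1 hψ
  obtain ⟨F, hF, rfl⟩ := Finset.subset_set_image_iff.1 ht
  exact ⟨F, hF, by rwa [Finset.coe_image] at hψt⟩

variable [CompactSpace K]

lemma convexHull_evalDual_subset_dualBall (E : Set K) :
    convexHull ℝ (evalDual '' E) ⊆ dualBall C(K, ℝ) := by
  refine convexHull_min (forall_mem_image.2 fun x _ f => f.norm_coe_le_norm x)
    fun ψ hψ ψ' hψ' s t hs ht hst f => ?_
  change |s * ψ f + t * ψ' f| ≤ ‖f‖
  calc |s * ψ f + t * ψ' f| ≤ s * |ψ f| + t * |ψ' f| :=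
        (abs_add_le _ _).trans_eq (by rw [abs_mul, abs_mul, abs_of_nonneg hs, abs_of_nonneg ht])
    _ ≤ s * ‖f‖ + t * ‖f‖ := by gcongr; exacts [hψ f, hψ' f]
    _ = ‖f‖ := by rw [← add_mul, hst, one_mul]

lemma dualBall_apply_nonneg {z : dualBall C(K, ℝ)} (hz : z.1 1 = 1) {f : C(K, ℝ)}
    (hf : ∀ x, 0 ≤ f x) : 0 ≤ z.1 f := by
  have hnorm : ‖‖f‖ • 1 - f‖ ≤ ‖f‖ := (ContinuousMap.norm_le _ (norm_nonneg f)).2 fun x => by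
    have hfx := (le_abs_self _).trans (f.norm_coe_le_norm x)
    have hle : |‖f‖ - f x| ≤ ‖f‖ := by
      rw [abs_of_nonneg (sub_nonneg.2 hfx)]
      linarith [hf x]
    simpa using hle
  have hle := (le_abs_self _).trans ((z.2 (‖f‖ • 1 - f)).trans hnorm)
  rw [map_sub, map_smul, hz, smul_eq_mul, mul_one] at hle
  linarith

lemma mem_closure_convexHull_evalDual {z : dualBall C(K, ℝ)} (hz : z.1 1 = 1) {D : Set K}
    (hD : Dense D) : z.1 ∈ closure (convexHull ℝ (evalDual '' D)) := by
  have : LocallyConvexSpace ℝ (WeakDual ℝ C(K, ℝ)) :=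
    WeakBilin.locallyConvexSpace (B := topDualPairing ℝ C(K, ℝ))
  by_contra hnot
  obtain ⟨ℓ, u, hℓ, hu⟩ := geometric_hahn_banach_closed_point
    (convex_convexHull ℝ (evalDual '' D)).closure isClosed_closure hnot
  obtain ⟨f, rfl⟩ := LinearMap.dualEmbedding_surjective (topDualPairing ℝ C(K, ℝ)) ℓ
  have hfD : ∀ x ∈ D, f x ≤ u := fun x hx =>
    (hℓ (evalDual x) (subset_closure (subset_convexHull ℝ _ (mem_image_of_mem _ hx)))).le
  have hfu : ∀ x, f x ≤ u := fun x =>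
    closure_minimal hfD (isClosed_le f.continuous continuous_const) (hD x)
  have hzf := dualBall_apply_nonneg hz (f := u • 1 - f) fun x => by simpa using hfu x
  rw [map_sub, map_smul, hz, smul_eq_mul, mul_one, sub_nonneg] at hzf
  exact hzf.not_gt hu

lemma mem_closure_setOf_lt_and_mem_convexHull {z : dualBall C(K, ℝ)} (hz : z.1 1 = 1) {D : Set K}
    (hD : Dense D) {g : C(K, ℝ)} {c : ℝ} (hc : c < z.1 g) :
    z ∈ closure {ψ : dualBall C(K, ℝ) | c < ψ.1 g ∧ ψ.1 ∈ convexHull ℝ (evalDual '' D)} := by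
  have hcl : z ∈ closure {ψ : dualBall C(K, ℝ) | ψ.1 ∈ convexHull ℝ (evalDual '' D)} := by
    rw [closure_subtype]
    refine closure_mono (fun ψ hψ => ?_) (mem_closure_convexHull_evalDual hz hD)
    exact ⟨⟨ψ, convexHull_evalDual_subset_dualBall _ hψ⟩, hψ, rfl⟩
  exact (isOpen_lt continuous_const (continuous_dualBall_apply g)).inter_closure ⟨hc, hcl⟩

end ConvexCombinations

section Hyperplanes

variable {K : Type u} [TopologicalSpace K]

/-- `p` vanishes on `F` and is positive elsewhere. -/
def IsPositiveOff (F : Set K) (p : C(K, ℝ)) : Prop := EqOn p 0 F ∧ ∀ x ∉ F, 0 < p x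

namespace IsPositiveOff

variable {F : Set K} {p q : C(K, ℝ)}

lemma nonneg (hp : IsPositiveOff F p) (x : K) : 0 ≤ p x := by
  by_cases hx : x ∈ F
  · exact (hp.1 hx).ge
  · exact (hp.2 x hx).le

lemma add_smul (hp : IsPositiveOff F p) (hq0 : ∀ x, 0 ≤ q x) (hqF : EqOn q 0 F) {t : ℝ}
    (ht : 0 < t) : IsPositiveOff F (q + t • p) :=
  ⟨fun x hx => by simp [hp.1 hx, hqF hx],
    fun x hx => add_pos_of_nonneg_of_pos (hq0 x) (mul_pos ht (hp.2 x hx))⟩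

lemma smul (hp : IsPositiveOff F p) {t : ℝ} (ht : 0 < t) : IsPositiveOff F (t • p) := by
  simpa only [zero_add] using hp.add_smul (q := 0) (fun _ => le_rfl) (fun _ _ => rfl) ht

lemma exists_apply_pos (hp : IsPositiveOff F p) (hq0 : ∀ x, 0 ≤ q x) (hqF : EqOn q 0 F)
    {ℓ : C(K, ℝ) →ₗ[ℝ] ℝ} (hℓ : 0 < ℓ q) : ∃ p', IsPositiveOff F p' ∧ 0 < ℓ p' := by
  refine ⟨_, hp.add_smul hq0 hqF (t := ℓ q / (|ℓ p| + 1)) (by positivity), ?_⟩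
  have hlt : ℓ q / (|ℓ p| + 1) * -ℓ p < ℓ q := by
    rw [div_mul_eq_mul_div, div_lt_iff₀ (by positivity)]
    exact mul_lt_mul_of_pos_left ((neg_le_abs _).trans_lt (lt_add_one _)) hℓ
  rw [map_add, map_smul, smul_eq_mul]
  linarith

lemma exists_apply_eq_zero {p₁ p₂ : C(K, ℝ)} (hp₁ : IsPositiveOff F p₁) (hp₂ : IsPositiveOff F p₂)
    {ℓ : C(K, ℝ) →ₗ[ℝ] ℝ} (hℓ₁ : 0 < ℓ p₁) (hℓ₂ : ℓ p₂ < 0) :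
    ∃ p, IsPositiveOff F p ∧ ℓ p = 0 := by
  have hp₂' := hp₂.smul hℓ₁
  refine ⟨_, hp₁.add_smul hp₂'.nonneg hp₂'.1 (neg_pos.2 hℓ₂), ?_⟩
  simp only [map_add, map_smul, smul_eq_mul]
  ring

lemma exists_norm_one_sub_smul_le [CompactSpace K] (hp : IsPositiveOff F p) :
    ∃ c : ℝ, ‖1 - c • p‖ ≤ 1 ∧ ∀ x, |(1 - c • p) x| = 1 → x ∈ F := by
  set c := (‖p‖ + 1)⁻¹
  have hoff : ∀ x ∉ F, |(1 - c • p) x| < 1 := fun x hx => by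
    have hpx : 0 < p x := hp.2 x hx
    have hlt : p x < ‖p‖ + 1 := (le_abs_self _).trans_lt ((p.norm_coe_le_norm x).trans_lt
      (lt_add_one _))
    have hcp : c * p x < 1 := by rwa [inv_mul_lt_iff₀ (by positivity), mul_one]
    have hcp0 : 0 < c * p x := by positivity
    change |1 - c * p x| < 1
    exact abs_lt.2 ⟨by linarith, by linarith⟩
  refine ⟨c, (ContinuousMap.norm_le _ zero_le_one).2 fun x => ?_, fun x hx => ?_⟩
  · by_cases hx : x ∈ F
    · simp [hp.1 hx]
    · exact (hoff x hx).le
  · exact by_contra fun hxF => (hoff x hxF).ne hx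

end IsPositiveOff

variable [CompactSpace K]

/-- Restriction of functionals on `C(K)` to the hyperplane `ker ℓ`. -/
noncomputable def restrictKer (ℓ : StrongDual ℝ C(K, ℝ)) :
    C(dualBall C(K, ℝ), dualBall ↥ℓ.ker) :=
  dualBallAdjoint ℓ.ker.subtypeL (Submodule.norm_subtypeL_le _)

/-- The functional `z - δ_a` on `C(K)`. On its kernel, `z` agrees with the evaluation at `a`. -/
noncomputable def subEval (z : dualBall C(K, ℝ)) (a : K) : StrongDual ℝ C(K, ℝ) :=
  WeakDual.toStrongDual z.1 - ContinuousMap.evalCLM ℝ a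

@[simp] lemma subEval_apply (z : dualBall C(K, ℝ)) (a : K) (f : C(K, ℝ)) :
    subEval z a f = z.1 f - f a := rfl

lemma restrictKer_subEval (z : dualBall C(K, ℝ)) (a : K) :
    restrictKer (subEval z a) z = evBall (subEval z a).ker a :=
  dualBall_ext fun f => sub_eq_zero.1 f.2

variable [T2Space K]

lemma exists_isPositiveOff_of_subset_gdeltaPoints {F : Finset K} (hF : ↑F ⊆ gdeltaPoints K) :
    ∃ p, IsPositiveOff (F : Set K) p := by
  have hGδ : IsGδ (F : Set K) := by
    rw [← biUnion_of_singleton (F : Set K)]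
    exact .biUnion F.finite_toSet fun x hx => hF hx
  obtain ⟨f, hfF, -, -, hf⟩ := exists_continuous_one_zero_of_isCompact_of_isGδ
    F.finite_toSet.isCompact hGδ isClosed_empty (disjoint_empty _)
  have hf1 : ∀ x, f x = 1 ↔ x ∈ F := fun x => (Set.ext_iff.1 hfF x).symm
  exact ⟨1 - f, fun x hx => sub_eq_zero.2 ((hf1 x).2 hx).symm,
    fun x hx => sub_pos.2 ((hf x).2.lt_of_ne fun h => hx ((hf1 x).1 h))⟩

lemma isGδ_singleton_restrictKer {ℓ : StrongDual ℝ C(K, ℝ)} (hℓ : ℓ 1 = 0) {F : Finset K}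
    {p₁ p₂ : C(K, ℝ)} (hp₁ : IsPositiveOff (F : Set K) p₁) (hp₂ : IsPositiveOff (F : Set K) p₂)
    (hℓ₁ : 0 < ℓ p₁) (hℓ₂ : ℓ p₂ < 0) {ψ : dualBall C(K, ℝ)}
    (hψ : ψ.1 ∈ convexHull ℝ (evalDual '' (F : Set K))) : IsGδ {restrictKer ℓ ψ} := by
  classical
  have hkronecker : ∀ x, ∃ g : ℓ.ker, x ∈ F → g.1 x = 1 ∧ ∀ y ∈ F, x ≠ y → g.1 y = 0 :=
    fun x => by
      obtain ⟨h, hh0, hh1, -⟩ := exists_continuous_zero_one_of_isClosed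
        ((F.erase x).finite_toSet.isClosed) (isClosed_singleton (x := x)) (by simp)
      refine ⟨⟨h - (ℓ h / ℓ p₁) • p₁, ?_⟩, fun hx => ⟨?_, fun y hy hxy => ?_⟩⟩
      · simp [hℓ₁.ne']
      · simp [hp₁.1 (Finset.mem_coe.2 hx), hh1 rfl]
      · have hhy : h y = 0 := hh0 (Finset.mem_coe.2 (Finset.mem_erase.2 ⟨hxy.symm, hy⟩))
        simp [hp₁.1 (Finset.mem_coe.2 hy), hhy]
  choose g hg using hkronecker
  obtain ⟨p, hp, hℓp⟩ := hp₁.exists_apply_eq_zero hp₂ (ℓ := ℓ.toLinearMap) hℓ₁ hℓ₂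
  obtain ⟨c, hnorm, hcF⟩ := hp.exists_norm_one_sub_smul_le
  have hmem : 1 - c • p ∈ ℓ.ker := by
    have hℓp' : ℓ p = 0 := hℓp
    simp [hℓ, hℓp']
  refine isGδ_singleton_of_norming (f := ⟨1 - c • p, hmem⟩) (fun x hx => (hg x hx).1)
    (fun x hx => (hg x hx).2) hnorm (fun x hx => hcF x hx) ?_
  exact apply_eq_of_mem_convexHull_evalDual hψ fun x hx => by simp [hp.1 hx]

lemma exists_isPositiveOff_subEval {z : dualBall C(K, ℝ)} (hz : z.1 1 = 1) {F : Finset K}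
    (hF : ↑F ⊆ gdeltaPoints K) {a : K} (ha : a ∉ F) {g : C(K, ℝ)} (hg : ∀ x, g x ∈ Icc 0 1)
    (hgF : EqOn g 0 (insert a F)) (hzg : 0 < z.1 g) :
    (∃ p, IsPositiveOff (F : Set K) p ∧ 0 < subEval z a p) ∧
      ∃ p, IsPositiveOff (F : Set K) p ∧ subEval z a p < 0 := by
  obtain ⟨p, hp⟩ := exists_isPositiveOff_of_subset_gdeltaPoints hF
  have hga : g a = 0 := hgF (mem_insert _ _)
  constructor
  · exact hp.exists_apply_pos (ℓ := (subEval z a).toLinearMap) (fun x => (hg x).1)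
      (hgF.mono (subset_insert _ _)) (by simpa [hga] using hzg)
  · obtain ⟨u, huF, hua, hu⟩ := exists_continuous_zero_one_of_isClosed F.finite_toSet.isClosed
      (isClosed_singleton (x := a)) (disjoint_singleton_right.2 ha)
    have hzu := dualBall_apply_nonneg hz (f := (1 - u) * (1 - g)) fun x =>
      mul_nonneg (sub_nonneg.2 (hu x).2) (sub_nonneg.2 (hg x).2)
    have hexpand : (1 - u) * (1 - g) = 1 - g - u * (1 - g) := by ring
    rw [hexpand, map_sub, map_sub, hz] at hzu
    have hqa : (u * (1 - g)) a = 1 := by simp [hua rfl, hga]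
    have hneg : 0 < -subEval z a (u * (1 - g)) := by
      rw [subEval_apply, hqa]
      linarith
    obtain ⟨p₂, hp₂, hℓp₂⟩ := hp.exists_apply_pos (q := u * (1 - g))
      (ℓ := -(subEval z a).toLinearMap) (fun x => mul_nonneg (hu x).1 (sub_nonneg.2 (hg x).2))
      (fun x hx => by simp [huF hx]) hneg
    exact ⟨p₂, hp₂, neg_pos.1 hℓp₂⟩

end Hyperplanes

section PropertyM

variable {K : Type u} [TopologicalSpace K] [CompactSpace K]

/-- The functional `z` annihilates all functions vanishing on a suitable countable set; for the
functional given by a probability measure this says that the support is separable. -/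
def IsCountablyConcentrated (z : dualBall C(K, ℝ)) : Prop :=
  ∃ E : Set K, E.Countable ∧ ∀ g : C(K, ℝ), (∀ x, g x ∈ Icc 0 1) → EqOn g 0 E → z.1 g = 0

lemma exists_apply_pos_of_not_isCountablyConcentrated {z : dualBall C(K, ℝ)} (hz : z.1 1 = 1)
    (hzc : ¬IsCountablyConcentrated z) {E : Set K} (hE : E.Countable) :
    ∃ g : C(K, ℝ), (∀ x, g x ∈ Icc 0 1) ∧ EqOn g 0 E ∧ 0 < z.1 g := by
  by_contra! hcon
  exact hzc ⟨E, hE, fun g hg hgE =>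
    (hcon g hg hgE).antisymm (dualBall_apply_nonneg hz fun x => (hg x).1)⟩

variable {z : dualBall C(K, ℝ)} {a : K}

lemma evBall_ker_subEval_notMem_closure (hz : z.1 1 = 1) (hzc : ¬IsCountablyConcentrated z)
    {J : Set (dualBall C(K, ℝ))} (hJ : J.Countable)
    (hJF : ∀ ψ ∈ J, ∃ F : Finset K, ψ.1 ∈ convexHull ℝ (evalDual '' (F : Set K)))
    {f : C(K, ℝ)} (hfa : f a = 0) {c : ℝ} (hc : 0 < c) (hJf : ∀ ψ ∈ J, c ≤ ψ.1 f) :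
    evBall (subEval z a).ker a ∉ closure (restrictKer (subEval z a) '' J) := fun haJ => by
  choose! F hF using hJF
  obtain ⟨g, -, hgF, hzg⟩ := exists_apply_pos_of_not_isCountablyConcentrated hz hzc
    ((hJ.biUnion fun ψ _ => (F ψ).countable_toSet).insert a)
  have hga : g a = 0 := hgF (mem_insert _ _)
  have hmem : f - (z.1 f / z.1 g) • g ∈ (subEval z a).ker := by
    simp [hga, hfa, hzg.ne']
  have hJc : ∀ w ∈ restrictKer (subEval z a) '' J, c ≤ w.1 ⟨_, hmem⟩ := by
    refine forall_mem_image.2 fun ψ hψ => ?_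
    have hψg : ψ.1 g = 0 := apply_eq_of_mem_convexHull_evalDual (hF ψ hψ) fun x hx =>
      hgF (mem_insert_of_mem _ (mem_biUnion hψ hx))
    change c ≤ ψ.1 (f - (z.1 f / z.1 g) • g)
    rw [map_sub, map_smul, hψg, smul_zero, sub_zero]
    exact hJf ψ hψ
  have hle : c ≤ (f - (z.1 f / z.1 g) • g) a := closure_minimal hJc
    (isClosed_le continuous_const (continuous_dualBall_apply _)) haJ
  have hzero : (f - (z.1 f / z.1 g) • g) a = 0 := by simp [hga, hfa]
  linarith

variable [T2Space K]

lemma restrictKer_mem_inducedSet (hz : z.1 1 = 1) (hzc : ¬IsCountablyConcentrated z)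
    (𝔰 : RetractionalSkeleton (dualBall (subEval z a).ker)) {ψ : dualBall C(K, ℝ)}
    (hψ : ψ.1 ∈ convexHull ℝ (evalDual '' (gdeltaPoints K \ {a}))) :
    restrictKer (subEval z a) ψ ∈ 𝔰.inducedSet := by
  obtain ⟨F, hF, hψF⟩ := exists_finset_mem_convexHull_evalDual hψ
  obtain ⟨g, hg, hgF, hzg⟩ := exists_apply_pos_of_not_isCountablyConcentrated hz hzc
    (F.countable_toSet.insert a)
  obtain ⟨⟨p₁, hp₁, hℓ₁⟩, p₂, hp₂, hℓ₂⟩ := exists_isPositiveOff_subEval hz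
    (fun x hx => (hF hx).1) (fun h => (hF h).2 rfl) hg hgF hzg
  exact 𝔰.mem_inducedSet_of_isGδ_singleton
    (isGδ_singleton_restrictKer (by simp [hz]) hp₁ hp₂ hℓ₁ hℓ₂ hψF)

lemma evBall_ker_subEval_mem_inducedSet (hz : z.1 1 = 1) (hzc : ¬IsCountablyConcentrated z)
    (𝔰 : RetractionalSkeleton (dualBall (subEval z a).ker)) {C : Set K} (hC : C.Countable)
    (hCG : C ⊆ gdeltaPoints K \ {a}) (ha : a ∈ closure C) :
    evBall (subEval z a).ker a ∈ 𝔰.inducedSet := by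
  refine evBall_mem_inducedSet_of_mem_closure 𝔰 hC (fun y hy => ?_) ha
  exact restrictKer_mem_inducedSet hz hzc 𝔰 (ψ := ⟨evalDual y, fun f => f.norm_coe_le_norm y⟩)
    (subset_convexHull ℝ _ (mem_image_of_mem _ (hCG hy)))

lemma evBall_ker_subEval_notMem_inducedSet (hz : z.1 1 = 1) (hzc : ¬IsCountablyConcentrated z)
    (hG : Dense (gdeltaPoints K \ {a}))
    (𝔰 : RetractionalSkeleton (dualBall (subEval z a).ker)) :
    evBall (subEval z a).ker a ∉ 𝔰.inducedSet := fun ha => by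
  obtain ⟨g, -, hga, hzg⟩ := exists_apply_pos_of_not_isCountablyConcentrated hz hzc
    (countable_singleton a)
  have hzA := mem_closure_setOf_lt_and_mem_convexHull hz hG (half_lt_self hzg)
  have haA := image_closure_subset_closure_image (map_continuous (restrictKer (subEval z a)))
    (mem_image_of_mem _ hzA)
  rw [restrictKer_subEval] at haA
  obtain ⟨J, hJA, hJ, haJ⟩ := 𝔰.exists_countable_mem_closure_image
    (fun ψ hψ => restrictKer_mem_inducedSet hz hzc 𝔰 (And.right hψ)) ha haA
  exact evBall_ker_subEval_notMem_closure hz hzc hJ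
    (fun ψ hψ => (exists_finset_mem_convexHull_evalDual (hJA hψ).2).imp fun _ h => h.2) (hga rfl)
    (half_pos hzg) (fun ψ hψ => (hJA hψ).1.le) haJ

theorem HereditarilyHasRetractionalSkeleton.isCountablyConcentrated
    (hH : HereditarilyHasRetractionalSkeleton K) (hG : Dense (gdeltaPoints K)) (hz : z.1 1 = 1) :
    IsCountablyConcentrated z := by
  by_contra hzc
  have hinf : (univ : Set K).Infinite := fun hfin => hzc
    ⟨univ, hfin.countable, fun g _ hg => by
      have hg0 : g = 0 := ContinuousMap.ext fun x => hg (mem_univ x)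
      rw [hg0, map_zero]⟩
  obtain ⟨a, ha⟩ := hinf.exists_accPt_principal
  have : (𝓝[≠] a).NeBot := by simpa [AccPt] using ha
  have hGa : Dense (gdeltaPoints K \ {a}) := hG.sdiff_singleton a
  obtain ⟨𝔱, h𝔱⟩ := hH.exists_inducedSet_eq_univ hG
  obtain ⟨C, hCG, hC, haC⟩ := 𝔱.exists_countable_mem_closure (A := gdeltaPoints K \ {a})
    (by simp [h𝔱]) (by simp [h𝔱]) (hGa a)
  obtain ⟨𝔰⟩ := hH (subEval z a).ker (subEval z a).isClosed_ker
  exact evBall_ker_subEval_notMem_inducedSet hz hzc hGa 𝔰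
    (evBall_ker_subEval_mem_inducedSet hz hzc 𝔰 hC hCG haC)

end PropertyM

section Measures

open MeasureTheory

variable {K : Type u} [TopologicalSpace K] [CompactSpace K] [MeasurableSpace K] [BorelSpace K]

lemma integrable_continuousMap (μ : Measure K) [IsFiniteMeasure μ] (f : C(K, ℝ)) :
    Integrable f μ :=
  f.continuous.integrable_of_hasCompactSupport (HasCompactSupport.of_compactSpace f)

/-- Integration against a probability measure, as an element of the dual ball of `C(K)`. -/
noncomputable def integralBall (μ : Measure K) [IsProbabilityMeasure μ] : dualBall C(K, ℝ) :=
  dualBallMk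
    { toFun := fun f => ∫ x, f x ∂μ
      map_add' := fun f g =>
        integral_add (integrable_continuousMap μ f) (integrable_continuousMap μ g)
      map_smul' := fun c f => integral_const_mul c f } fun f => by
        simpa using norm_integral_le_of_norm_le_const (μ := μ) (f := f)
          (Eventually.of_forall f.norm_coe_le_norm)

lemma integralBall_apply (μ : Measure K) [IsProbabilityMeasure μ] (f : C(K, ℝ)) :
    (integralBall μ).1 f = ∫ x, f x ∂μ := rfl

theorem HereditarilyHasRetractionalSkeleton.hasPropertyM [T2Space K]
    (hH : HereditarilyHasRetractionalSkeleton K) (hG : Dense (gdeltaPoints K)) :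
    HasPropertyM K := by
  intro μ hμ _
  obtain ⟨E, hE, hzero⟩ := hH.isCountablyConcentrated hG (z := integralBall μ)
    (by simp [integralBall_apply])
  refine ⟨E, hE, fun x hx => by_contra fun hxE => ?_⟩
  obtain ⟨g, hgE, hgx, hg⟩ := exists_continuous_zero_one_of_isClosed isClosed_closure
    (isClosed_singleton (x := x)) (disjoint_singleton_right.2 hxE)
  have hgx' : g x ≠ 0 := by simp [hgx rfl]
  have hpos : 0 < (integralBall μ).1 g := by
    rw [integralBall_apply, integral_pos_iff_support_of_nonneg (fun y => (hg y).1)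
      (integrable_continuousMap μ g)]
    exact hx _ (g.continuous.isOpen_support.mem_nhds hgx')
  exact hpos.ne' (hzero g hg (hgE.mono subset_closure))

end Measures

/-! ### Projectional skeletons and dual balls -/

section ProjectionalSkeleton

variable {X : Type u} [NormedAddCommGroup X] [NormedSpace ℝ X]

attribute [instance] ProjectionalSkeleton.po ProjectionalSkeleton.ne

lemma metrizableSpace_range_dualBallAdjoint {P : X →L[ℝ] X} (hP : ‖P‖ ≤ 1)
    (hsep : IsSeparable (range P)) (hidem : ∀ x, P (P x) = P x) :
    MetrizableSpace (range (dualBallAdjoint P hP)) := by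
  obtain ⟨C, hC, hPC⟩ := hsep
  have := hC.to_subtype
  have : CompactSpace (range (dualBallAdjoint P hP)) :=
    isCompact_iff_compactSpace.1 (isCompact_range (map_continuous _))
  let e : range (dualBallAdjoint P hP) → C → ℝ := fun z c => z.1.1 c.1
  have he : Continuous e := continuous_pi fun c =>
    (continuous_dualBall_apply c.1).comp continuous_subtype_val
  refine (he.isClosedEmbedding ?_).isEmbedding.metrizableSpace
  rintro ⟨_, w, rfl⟩ ⟨_, w', rfl⟩ h
  have heq : EqOn (fun x => w.1 (P x)) (fun x => w'.1 (P x)) (closure C) :=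
    EqOn.closure (fun c hc => congrFun h ⟨c, hc⟩)
      ((WeakDual.toStrongDual w.1).continuous.comp P.continuous)
      ((WeakDual.toStrongDual w'.1).continuous.comp P.continuous)
  refine Subtype.ext (dualBall_ext fun x => ?_)
  simpa [hidem] using heq (hPC (mem_range_self x))

lemma ProjectionalSkeleton.tendsto_P_of_strictMono (𝔰 : ProjectionalSkeleton X)
    (h𝔰 : ∀ s, ‖𝔰.P s‖ ≤ 1) {f : ℕ → 𝔰.Γ} (hf : StrictMono f) {t : 𝔰.Γ}
    (ht : IsLUB (range f) t) (hrange : range (𝔰.P t) = closure (⋃ n, range (𝔰.P (f n)))) (x : X) :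
    Tendsto (fun n => 𝔰.P (f n) x) atTop (𝓝 (𝔰.P t x)) := by
  refine Metric.tendsto_atTop.2 fun ε hε => ?_
  obtain ⟨y, hy, hxy⟩ := Metric.mem_closure_iff.1 (hrange ▸ mem_range_self x) (ε / 2) (half_pos hε)
  obtain ⟨N, y', rfl⟩ := mem_iUnion.1 hy
  refine ⟨N, fun n hn => ?_⟩
  set y := 𝔰.P (f N) y'
  have hPx : 𝔰.P (f n) (𝔰.P t x) = 𝔰.P (f n) x :=
    (𝔰.comp_eq_of_le _ _ (ht.1 ⟨n, rfl⟩) x).1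
  have hPy : 𝔰.P (f n) y = y := (𝔰.comp_eq_of_le _ _ (hf.monotone hn) y').2
  calc dist (𝔰.P (f n) x) (𝔰.P t x)
      ≤ dist (𝔰.P (f n) (𝔰.P t x)) (𝔰.P (f n) y) + dist y (𝔰.P t x) := by
        rw [hPx, hPy]
        exact dist_triangle _ _ _
    _ ≤ dist (𝔰.P t x) y + dist y (𝔰.P t x) := by
        gcongr
        rw [dist_eq_norm, dist_eq_norm, ← map_sub]
        exact ((𝔰.P (f n)).le_of_opNorm_le (h𝔰 _) _).trans_eq (one_mul _)
    _ < ε := by rw [dist_comm y]; linarith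

theorem Has1ProjectionalSkeleton.hasRetractionalSkeleton (h : Has1ProjectionalSkeleton X) :
    HasRetractionalSkeleton (dualBall X) := by
  obtain ⟨𝔰, h𝔰⟩ := h
  have : IsDirectedOrder 𝔰.Γ := ⟨𝔰.directed⟩
  refine ⟨{ Γ := 𝔰.Γ
            po := 𝔰.po
            ne := 𝔰.ne
            directed := 𝔰.directed
            r := fun s => dualBallAdjoint (𝔰.P s) (h𝔰 s)
            isRetraction := fun s z => dualBall_ext fun x => by simp [𝔰.idem]
            metrizable := fun s =>
              metrizableSpace_range_dualBallAdjoint _ (𝔰.separable s) (𝔰.idem s)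
            tendsto_id := fun z => tendsto_dualBall_iff.2 fun x => ?_
            comp_eq_of_le := fun s t hst z =>
              ⟨dualBall_ext fun x => by simp [(𝔰.comp_eq_of_le s t hst x).2],
                dualBall_ext fun x => by simp [(𝔰.comp_eq_of_le s t hst x).1]⟩
            sup_seq := fun f hf => ?_ }⟩
  · obtain ⟨s, y, rfl⟩ := 𝔰.covers x
    refine tendsto_const_nhds.congr' ?_
    filter_upwards [eventually_ge_atTop s] with t hst
    rw [dualBallAdjoint_apply, (𝔰.comp_eq_of_le s t hst y).2]
  · obtain ⟨t, ht, hrange⟩ := 𝔰.sup_seq f hf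
    exact ⟨t, ht, fun z => tendsto_dualBall_iff.2 fun x =>
      ((WeakDual.toStrongDual z.1).continuous.tendsto _).comp
        (𝔰.tendsto_P_of_strictMono h𝔰 hf ht hrange x)⟩

end ProjectionalSkeleton

/-! ### Coordinate retractions of a Corson compact space -/

section CoordRetraction

variable {K : Type u} [TopologicalSpace K] {Γ : Type v} {e : K → Γ → ℝ}

/-- For `e : K → ℝ^Γ`, the set `C` of coordinates is good if erasing all coordinates outside `C`
is induced by a continuous self-map of `K`. -/
def IsGoodSet (e : K → Γ → ℝ) (C : Set Γ) : Prop :=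
  ∃ ρ : C(K, K), ∀ x, e (ρ x) = C.indicator (e x)

open Classical in
/-- The self-map of `K` erasing all coordinates outside the good set `C`; the identity when
`C` is not good. -/
noncomputable def coordRetraction (e : K → Γ → ℝ) (C : Set Γ) : C(K, K) :=
  if h : IsGoodSet e C then h.choose else ContinuousMap.id K

namespace IsGoodSet

lemma apply_coordRetraction {C : Set Γ} (h : IsGoodSet e C) (x : K) :
    e (coordRetraction e C x) = C.indicator (e x) := by
  rw [coordRetraction, dif_pos h]
  exact h.choose_spec x

variable {C D : Set Γ} (hinj : Function.Injective e)
include hinj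

lemma coordRetraction_eq_self (h : IsGoodSet e C) {x : K} (hx : ∀ γ ∉ C, e x γ = 0) :
    coordRetraction e C x = x :=
  hinj <| (h.apply_coordRetraction x).trans <|
    indicator_eq_self.2 fun γ hγ => by_contra fun hC => hγ (hx γ hC)

lemma coordRetraction_coordRetraction_of_subset (hC : IsGoodSet e C) (hD : IsGoodSet e D)
    (hCD : C ⊆ D) (x : K) :
    coordRetraction e C (coordRetraction e D x) = coordRetraction e C x :=
  hinj <| by simp only [IsGoodSet.apply_coordRetraction, hC, hD, indicator_indicator,
    inter_eq_left.2 hCD]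

lemma coordRetraction_coordRetraction_of_superset (hC : IsGoodSet e C) (hD : IsGoodSet e D)
    (hCD : C ⊆ D) (x : K) :
    coordRetraction e D (coordRetraction e C x) = coordRetraction e C x :=
  hinj <| by simp only [IsGoodSet.apply_coordRetraction, hC, hD, indicator_indicator,
    inter_eq_right.2 hCD]

end IsGoodSet

lemma apply_eq_zero_of_mem_closure_of_notMem_support (he : Continuous e) {E : Set K} {γ : Γ}
    (hγ : γ ∉ ⋃ y ∈ E, Function.support (e y)) {z : K} (hz : z ∈ closure E) : e z γ = 0 := by
  have hE (y : K) (hy : y ∈ E) : e y γ = 0 := by_contra fun hne => hγ (mem_biUnion hy hne)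
  exact closure_minimal hE (isClosed_eq ((continuous_apply γ).comp he) continuous_const) hz

variable [CompactSpace K]

lemma exists_apply_eq_indicator_iUnion (he : Continuous e) {C : ℕ → Set Γ} (hC : Monotone C)
    {x : K} {z : ℕ → K} (hz : ∀ n, EqOn (e (z n)) (e x) (C n))
    (hz0 : ∀ n, ∀ γ ∉ ⋃ k, C k, e (z n) γ = 0) :
    ∃ y, e y = (⋃ n, C n).indicator (e x) := by
  obtain ⟨y, -, hy⟩ := isCompact_univ (X := K) (f := map z atTop) (by simp)
  have hcluster (γ : Γ) : MapClusterPt (e y γ) atTop fun n => e (z n) γ :=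
    MapClusterPt.continuousAt_comp ((continuous_apply γ).comp he).continuousAt hy
  have apply_eq {γ : Γ} {a : ℝ} (ha : ∀ᶠ n in atTop, e (z n) γ = a) : e y γ = a := by
    by_contra hne
    obtain ⟨n, hn, rfl⟩ :=
      (((hcluster γ).frequently (isOpen_compl_singleton.mem_nhds hne)).and_eventually ha).exists
    exact hn rfl
  refine ⟨y, funext fun γ => ?_⟩
  by_cases hγ : γ ∈ ⋃ n, C n
  · rw [indicator_of_mem hγ]
    obtain ⟨n, hn⟩ := mem_iUnion.1 hγ
    exact apply_eq (eventually_atTop.2 ⟨n, fun m hm => hz m (hC hm hn)⟩)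
  · rw [indicator_of_notMem hγ]
    exact apply_eq (.of_forall fun n => hz0 n γ hγ)

lemma exists_countable_superset_forall_exists_eqOn (he : Continuous e)
    (hsupp : ∀ x, (Function.support (e x)).Countable) {C : Set Γ} (hC : C.Countable) :
    ∃ D : Set Γ, D.Countable ∧ C ⊆ D ∧ ∀ x, ∃ z, EqOn (e z) (e x) C ∧ ∀ γ ∉ D, e z γ = 0 := by
  have := hC.to_subtype
  let π : K → C → ℝ := fun x c => e x c
  have hπ : Continuous π := continuous_pi fun c => (continuous_apply (c : Γ)).comp he
  obtain ⟨S, hSπ, hS, hS_dense⟩ :=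
    (IsSeparable.of_separableSpace (range π)).exists_countable_dense_subset
  obtain ⟨E, -, hE⟩ := SurjOn.exists_bijOn_subset (s := univ) (f := π) (t := S) <| by
    rwa [SurjOn, image_univ]
  have hE_countable : E.Countable := hE.mapsTo.countable_of_injOn hE.injOn hS
  have hrange : range π ⊆ π '' closure E := hS_dense.trans <|
    closure_minimal (hE.image_eq ▸ image_mono subset_closure)
      (isClosed_closure.isCompact.image hπ).isClosed
  refine ⟨C ∪ ⋃ y ∈ E, Function.support (e y),
    hC.union (hE_countable.biUnion fun y _ => hsupp y), subset_union_left, fun x => ?_⟩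
  obtain ⟨z, hz, hzx⟩ := hrange (mem_range_self x)
  refine ⟨z, fun γ hγ => congrFun hzx ⟨γ, hγ⟩, fun γ hγ => ?_⟩
  exact apply_eq_zero_of_mem_closure_of_notMem_support he (fun h => hγ (Or.inr h)) hz

/-- Continuity of the erasure is automatic: `e` is an embedding and each coordinate of the erased
point is continuous. -/
lemma isGoodSet_of_forall_exists (he : Continuous e) (hinj : Function.Injective e) {C : Set Γ}
    (h : ∀ x, ∃ y, e y = C.indicator (e x)) : IsGoodSet e C := by
  choose ρ hρ using h
  refine ⟨⟨ρ, (he.isClosedEmbedding hinj).isEmbedding.continuous_iff.2 ?_⟩, hρ⟩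
  refine continuous_pi fun γ => ?_
  have hγ (x : K) : (e ∘ ρ) x γ = C.indicator (e x) γ := congrFun (hρ x) γ
  simp only [hγ]
  by_cases hγC : γ ∈ C
  · simp only [indicator_of_mem hγC]
    exact (continuous_apply γ).comp he
  · simp only [indicator_of_notMem hγC]
    exact continuous_const

lemma IsGoodSet.iUnion (he : Continuous e) (hinj : Function.Injective e) {C : ℕ → Set Γ}
    (hmono : Monotone C) (hC : ∀ n, IsGoodSet e (C n)) : IsGoodSet e (⋃ n, C n) := by
  refine isGoodSet_of_forall_exists he hinj fun x =>
    exists_apply_eq_indicator_iUnion he hmono (z := fun n => coordRetraction e (C n) x) ?_ ?_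
  · intro n γ hγ
    simp only [(hC n).apply_coordRetraction, indicator_of_mem hγ]
  · intro n γ hγ
    have hγn : γ ∉ C n := fun h => hγ (mem_iUnion_of_mem n h)
    simp only [(hC n).apply_coordRetraction, indicator_of_notMem hγn]

lemma exists_countable_isGoodSet_superset (he : Continuous e) (hinj : Function.Injective e)
    (hsupp : ∀ x, (Function.support (e x)).Countable) {C : Set Γ} (hC : C.Countable) :
    ∃ D : Set Γ, D.Countable ∧ C ⊆ D ∧ IsGoodSet e D := by
  choose next hnext using fun C : {C : Set Γ // C.Countable} =>
    exists_countable_superset_forall_exists_eqOn he hsupp C.2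
  let F (n : ℕ) : {C : Set Γ // C.Countable} := (fun C => ⟨next C, (hnext C).1⟩)^[n] ⟨C, hC⟩
  have hF (n : ℕ) : (F (n + 1)).1 = next (F n) := by
    simp only [F, Function.iterate_succ_apply']
  have hmono : Monotone fun n => (F n).1 :=
    monotone_nat_of_le_succ fun n => (hnext (F n)).2.1.trans (hF n).ge
  refine ⟨⋃ n, (F n).1, countable_iUnion fun n => (F n).2, subset_iUnion (fun n => (F n).1) 0,
    isGoodSet_of_forall_exists he hinj fun x => ?_⟩
  choose z hz hz0 using fun n => (hnext (F n)).2.2 x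
  refine exists_apply_eq_indicator_iUnion he hmono hz fun n γ hγ => hz0 n γ fun h => hγ ?_
  exact mem_iUnion_of_mem (n + 1) (hF n ▸ h)

lemma exists_finset_forall_abs_sub_lt (he : Continuous e) (hinj : Function.Injective e)
    (f : C(K, ℝ)) {ε : ℝ} (hε : 0 < ε) :
    ∃ J : Finset Γ, ∀ x y, (∀ γ ∈ J, e x γ = e y γ) → |f x - f y| < ε := by
  have hfar : IsCompact {p : K × K | ε ≤ |f p.1 - f p.2|} :=
    (isClosed_le continuous_const (by fun_prop)).isCompact
  have hcover : {p : K × K | ε ≤ |f p.1 - f p.2|} ⊆ ⋃ γ, {p | e p.1 γ ≠ e p.2 γ} := by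
    intro p (hp : ε ≤ |f p.1 - f p.2|)
    by_contra hn
    have hp12 : p.1 = p.2 := hinj <| funext fun γ => by_contra fun hγ => hn (mem_iUnion_of_mem γ hγ)
    rw [hp12, sub_self, abs_zero] at hp
    exact hp.not_gt hε
  have hopen (γ : Γ) : IsOpen {p : K × K | e p.1 γ ≠ e p.2 γ} := by
    have hγ := (continuous_apply γ).comp he
    exact isOpen_ne_fun (hγ.comp continuous_fst) (hγ.comp continuous_snd)
  obtain ⟨J, hJ⟩ := hfar.elim_finite_subcover _ hopen hcover
  refine ⟨J, fun x y hxy => lt_of_not_ge fun hn => ?_⟩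
  obtain ⟨γ, hγ, hne⟩ := mem_iUnion₂.1 (hJ (show (x, y) ∈ _ from hn))
  exact hne (hxy γ hγ)

lemma exists_countable_forall_comp_coordRetraction_eq (he : Continuous e)
    (hinj : Function.Injective e) (f : C(K, ℝ)) :
    ∃ D : Set Γ, D.Countable ∧ ∀ C, IsGoodSet e C → D ⊆ C → f.comp (coordRetraction e C) = f := by
  choose J hJ using fun n : ℕ =>
    exists_finset_forall_abs_sub_lt he hinj f (Nat.one_div_pos_of_nat (α := ℝ) (n := n))
  refine ⟨⋃ n, (J n : Set Γ), countable_iUnion fun n => (J n).countable_toSet,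
    fun C hC hJC => ContinuousMap.ext fun x => ?_⟩
  have hagree (n : ℕ) : ∀ γ ∈ J n, e (coordRetraction e C x) γ = e x γ := fun γ hγ => by
    rw [hC.apply_coordRetraction, indicator_of_mem (hJC (mem_iUnion_of_mem n hγ))]
  have hle : |f (coordRetraction e C x) - f x| ≤ 0 :=
    ge_of_tendsto' tendsto_one_div_add_atTop_nhds_zero_nat fun n => (hJ n _ _ (hagree n)).le
  exact sub_eq_zero.1 (abs_nonpos_iff.1 hle)

lemma tendsto_comp_coordRetraction (he : Continuous e) (hinj : Function.Injective e)
    {C : ℕ → Set Γ} (hmono : Monotone C) (hC : ∀ n, IsGoodSet e (C n)) (f : C(K, ℝ)) :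
    Tendsto (fun n => f.comp (coordRetraction e (C n))) atTop
      (𝓝 (f.comp (coordRetraction e (⋃ n, C n)))) := by
  refine Metric.tendsto_nhds.2 fun ε hε => ?_
  obtain ⟨J, hJ⟩ := exists_finset_forall_abs_sub_lt he hinj f (half_pos hε)
  have hmem (γ : Γ) : ∀ᶠ n in atTop, γ ∈ C n ↔ γ ∈ ⋃ n, C n := by
    by_cases hγ : γ ∈ ⋃ n, C n
    · obtain ⟨n, hn⟩ := mem_iUnion.1 hγ
      exact (eventually_ge_atTop n).mono fun m hm => iff_of_true (hmono hm hn) hγ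
    · exact .of_forall fun n => iff_of_false (fun h => hγ (mem_iUnion_of_mem n h)) hγ
  filter_upwards [(Finset.eventually_all J).2 fun γ _ => hmem γ] with n hn
  have hagree (x : K) : ∀ γ ∈ J,
      e (coordRetraction e (C n) x) γ = e (coordRetraction e (⋃ n, C n) x) γ := fun γ hγ => by
    rw [(hC n).apply_coordRetraction, (IsGoodSet.iUnion he hinj hmono hC).apply_coordRetraction]
    by_cases hγn : γ ∈ C n
    · rw [indicator_of_mem hγn, indicator_of_mem ((hn γ hγ).1 hγn)]
    · rw [indicator_of_notMem hγn, indicator_of_notMem (hγn ∘ (hn γ hγ).2)]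
  exact ((ContinuousMap.dist_le (half_pos hε).le).2 fun x => (hJ _ _ (hagree x)).le).trans_lt
    (half_lt_self hε)

lemma isSeparable_range_comp_coordRetraction (he : Continuous e) (hinj : Function.Injective e)
    {C : Set Γ} (hCc : C.Countable) (hC : IsGoodSet e C) :
    IsSeparable (range fun f : C(K, ℝ) => f.comp (coordRetraction e C)) := by
  have := hCc.to_subtype
  let R : Set K := range (coordRetraction e C)
  have : CompactSpace R := isCompact_iff_compactSpace.1 (isCompact_range (map_continuous _))
  let π : R → C → ℝ := fun x c => e x c
  have hπ : Continuous π :=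
    continuous_pi fun c => (continuous_apply (c : Γ)).comp (he.comp continuous_subtype_val)
  have hπinj : Function.Injective π := by
    rintro ⟨_, x, rfl⟩ ⟨_, y, rfl⟩ hxy
    refine Subtype.ext <| hinj <| funext fun γ => ?_
    by_cases hγ : γ ∈ C
    · exact congrFun hxy ⟨γ, hγ⟩
    · simp only [hC.apply_coordRetraction, indicator_of_notMem hγ]
  have : MetrizableSpace R := (hπ.isClosedEmbedding hπinj).isEmbedding.metrizableSpace
  let q : C(K, R) := ⟨fun x => ⟨coordRetraction e C x, x, rfl⟩, by fun_prop⟩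
  refine ((IsSeparable.of_separableSpace (univ : Set C(R, ℝ))).image
    (ContinuousMap.continuous_precomp q)).mono ?_
  rintro _ ⟨f, rfl⟩
  exact ⟨f.comp ⟨Subtype.val, continuous_subtype_val⟩, mem_univ _, rfl⟩

end CoordRetraction

/-! ### Functionals on `C(K)` under property (M) -/

section Functional

open MeasureTheory

variable {K : Type u} [TopologicalSpace K]

lemma HasPropertyM.isSeparable_support [MeasurableSpace K] (hM : HasPropertyM K) (μ : Measure K)
    [IsFiniteMeasure μ] [μ.Regular] : IsSeparable μ.support := by
  by_cases hμ : μ = 0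
  · rw [hμ, Measure.support_zero]
    exact countable_empty.isSeparable
  have : NeZero μ := ⟨hμ⟩
  have hreg : ((μ univ)⁻¹ • μ).Regular :=
    Measure.Regular.smul (ENNReal.inv_ne_top.2 (NeZero.ne _))
  refine (hM _ inferInstance hreg).mono fun x hx U hU => ?_
  rw [Measure.smul_apply, smul_eq_mul]
  exact ENNReal.mul_pos (ENNReal.inv_ne_zero.2 (measure_ne_top _ _))
    ((Measure.mem_support_iff_forall x).1 hx U hU).ne'

variable [CompactSpace K]

/-- On the pairs `(f, g) ∈ C(K) × C(K)` with constant sum `c`, the functional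
`(f, g) ↦ φ f + ‖φ‖ c` is positive, since `0 ≤ f ≤ c` gives `φ f ≥ -‖φ‖ c`. A positive extension
`Φ` yields `φ f = Φ (f, -f) = Φ (f, 0) - Φ (0, f)`. -/
lemma exists_nonneg_sub_nonneg (φ : StrongDual ℝ C(K, ℝ)) :
    ∃ φ₁ φ₂ : C(K, ℝ) →ₗ[ℝ] ℝ, (∀ f, 0 ≤ f → 0 ≤ φ₁ f) ∧ (∀ f, 0 ≤ f → 0 ≤ φ₂ f) ∧
      ∀ f, φ f = φ₁ f - φ₂ f := by
  rcases isEmpty_or_nonempty K with hK | hK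
  · exact ⟨0, 0, fun _ _ => le_rfl, fun _ _ => le_rfl, fun f => by
      simp [Subsingleton.elim f 0]⟩
  obtain ⟨x₀⟩ := id hK
  let s := PointedCone.positive ℝ (C(K, ℝ) × C(K, ℝ))
  let constSum : Submodule ℝ (C(K, ℝ) × C(K, ℝ)) :=
    (Submodule.span ℝ {1}).comap (LinearMap.fst ℝ _ _ + LinearMap.snd ℝ _ _)
  let G : C(K, ℝ) × C(K, ℝ) →ₗ[ℝ] ℝ :=
    φ.toLinearMap ∘ₗ LinearMap.fst ℝ _ _ + ‖φ‖ • (ContinuousMap.evalCLM ℝ x₀).toLinearMap ∘ₗ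
      (LinearMap.fst ℝ _ _ + LinearMap.snd ℝ _ _)
  have hG (f g : C(K, ℝ)) : G (f, g) = φ f + ‖φ‖ * (f x₀ + g x₀) := rfl
  have hG_nonneg (p : constSum) (hp : (p : C(K, ℝ) × C(K, ℝ)) ∈ s) : 0 ≤ G p := by
    obtain ⟨⟨f, g⟩, hfg⟩ := p
    obtain ⟨hf, hg⟩ : 0 ≤ f ∧ 0 ≤ g := hp
    obtain ⟨c, hc⟩ := Submodule.mem_span_singleton.1 hfg
    have hsum (x : K) : c = f x + g x := by simpa using DFunLike.congr_fun hc x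
    have hfc : ‖f‖ ≤ c := (ContinuousMap.norm_le_of_nonempty f).2 fun x => by
      have hfx : 0 ≤ f x := hf x
      have hgx : 0 ≤ g x := hg x
      rw [Real.norm_of_nonneg hfx, hsum x]
      linarith
    have hφf : -(‖φ‖ * ‖f‖) ≤ φ f := (abs_le.1 (φ.le_opNorm f)).1
    rw [hG, ← hsum]
    linarith [mul_le_mul_of_nonneg_left hfc (norm_nonneg φ)]
  have hcofinal (p : C(K, ℝ) × C(K, ℝ)) : ∃ q : constSum, (q : C(K, ℝ) × C(K, ℝ)) + p ∈ s := by
    refine ⟨⟨(‖p.1‖ • 1, ‖p.2‖ • 1), ?_⟩, fun x => ?_, fun x => ?_⟩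
    · exact Submodule.mem_span_singleton.2 ⟨‖p.1‖ + ‖p.2‖, add_smul _ _ _⟩
    · simpa [add_comm] using neg_le_iff_add_nonneg.1 (p.1.neg_norm_le_apply x)
    · simpa [add_comm] using neg_le_iff_add_nonneg.1 (p.2.neg_norm_le_apply x)
  obtain ⟨Φ, hΦG, hΦ⟩ :=
    riesz_extension s ⟨constSum, G.domRestrict constSum⟩ hG_nonneg hcofinal
  refine ⟨Φ ∘ₗ LinearMap.inl ℝ _ _, Φ ∘ₗ LinearMap.inr ℝ _ _, fun f hf => hΦ _ ⟨hf, le_rfl⟩,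
    fun f hf => hΦ _ ⟨le_rfl, hf⟩, fun f => ?_⟩
  have hf : (f, -f) ∈ constSum := by simp [constSum]
  calc φ f = G (f, -f) := by simp [hG]
    _ = Φ (f, -f) := (hΦG ⟨_, hf⟩).symm
    _ = Φ ((f, 0) - (0, f)) := by simp
    _ = Φ (f, 0) - Φ (0, f) := map_sub Φ _ _

variable [T2Space K] [MeasurableSpace K] [BorelSpace K]

lemma exists_regular_measure_forall_integral_eq (φ : C(K, ℝ) →ₗ[ℝ] ℝ)
    (hφ : ∀ f, 0 ≤ f → 0 ≤ φ f) :
    ∃ μ : Measure K, IsFiniteMeasure μ ∧ μ.Regular ∧ ∀ f : C(K, ℝ), ∫ x, f x ∂μ = φ f := by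
  let Λ : CompactlySupportedContinuousMap K ℝ →ₚ[ℝ] ℝ := PositiveLinearMap.mk₀
    { toFun := fun g => φ g.toContinuousMap
      map_add' := fun g g' => φ.map_add g.toContinuousMap g'.toContinuousMap
      map_smul' := fun c g => φ.map_smul c g.toContinuousMap }
    fun g hg => hφ _ hg
  exact ⟨RealRMK.rieszMeasure Λ, inferInstanceAs (IsFiniteMeasure (RealRMK.rieszMeasure Λ)),
    inferInstanceAs (RealRMK.rieszMeasure Λ).Regular, fun f =>
      RealRMK.integral_rieszMeasure Λ (CompactlySupportedContinuousMap.continuousMapEquiv f)⟩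

variable {Γ : Type v} {e : K → Γ → ℝ}

/-- The representing measure lives on the closure of a countable set `E`, and a coordinate
retraction keeping the supports of the points of `E` fixes this closure. -/
lemma exists_countable_forall_apply_comp_coordRetraction_of_nonneg (he : Continuous e)
    (hinj : Function.Injective e) (hsupp : ∀ x, (Function.support (e x)).Countable)
    (hM : HasPropertyM K) (φ : C(K, ℝ) →ₗ[ℝ] ℝ) (hφ : ∀ f, 0 ≤ f → 0 ≤ φ f) :
    ∃ D : Set Γ, D.Countable ∧ ∀ C, IsGoodSet e C → D ⊆ C → ∀ f : C(K, ℝ),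
      φ (f.comp (coordRetraction e C)) = φ f := by
  obtain ⟨μ, hfin, hreg, hμ⟩ := exists_regular_measure_forall_integral_eq φ hφ
  obtain ⟨E, hE_countable, hE⟩ := hM.isSeparable_support μ
  refine ⟨⋃ y ∈ E, Function.support (e y), hE_countable.biUnion fun y _ => hsupp y,
    fun C hC hEC f => ?_⟩
  rw [← hμ, ← hμ]
  refine integral_congr_ae ?_
  filter_upwards [Measure.support_mem_ae_of_innerRegularWRT_isCompact_isOpen hreg.innerRegular]
    with x hx
  have hx0 : ∀ γ ∉ C, e x γ = 0 := fun γ hγ =>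
    apply_eq_zero_of_mem_closure_of_notMem_support he (fun h => hγ (hEC h)) (hE hx)
  rw [ContinuousMap.comp_apply, hC.coordRetraction_eq_self hinj hx0]

lemma exists_countable_forall_apply_comp_coordRetraction (he : Continuous e)
    (hinj : Function.Injective e) (hsupp : ∀ x, (Function.support (e x)).Countable)
    (hM : HasPropertyM K) (φ : StrongDual ℝ C(K, ℝ)) :
    ∃ D : Set Γ, D.Countable ∧ ∀ C, IsGoodSet e C → D ⊆ C → ∀ f : C(K, ℝ),
      φ (f.comp (coordRetraction e C)) = φ f := by
  obtain ⟨φ₁, φ₂, hφ₁, hφ₂, hφ⟩ := exists_nonneg_sub_nonneg φ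
  obtain ⟨D₁, hD₁, h₁⟩ :=
    exists_countable_forall_apply_comp_coordRetraction_of_nonneg he hinj hsupp hM φ₁ hφ₁
  obtain ⟨D₂, hD₂, h₂⟩ :=
    exists_countable_forall_apply_comp_coordRetraction_of_nonneg he hinj hsupp hM φ₂ hφ₂
  refine ⟨D₁ ∪ D₂, hD₁.union hD₂, fun C hC hDC f => ?_⟩
  rw [hφ, hφ, h₁ C hC (subset_union_left.trans hDC), h₂ C hC (subset_union_right.trans hDC)]

end Functional

/-! ### Projectional skeletons in closed subspaces of `C(K)` -/

section Annihilator

variable {E : Type*} [NormedAddCommGroup E] [NormedSpace ℝ E]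

lemma exists_annihilator_apply_eq_infDist (Y : Subspace ℝ E) (d : E) :
    ∃ χ : StrongDual ℝ E, ‖χ‖ ≤ 1 ∧ (∀ y ∈ Y, χ y = 0) ∧ χ d = Metric.infDist d Y := by
  obtain ⟨ψ, hψ, hψd⟩ := exists_dual_vector'' ℝ (Y.mkQ d)
  have hle (x : E) : ‖ψ (Y.mkQ x)‖ ≤ 1 * ‖x‖ :=
    (ψ.le_of_opNorm_le hψ _).trans (by gcongr; exact Submodule.Quotient.norm_mk_le Y x)
  refine ⟨(ψ.toLinearMap ∘ₗ Y.mkQ).mkContinuous 1 hle,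
    LinearMap.mkContinuous_norm_le _ zero_le_one _, fun y hy => ?_, ?_⟩
  · rw [LinearMap.mkContinuous_apply, LinearMap.comp_apply, Submodule.mkQ_apply,
      (Submodule.Quotient.mk_eq_zero Y).2 hy, map_zero]
  · exact hψd.trans (QuotientAddGroup.norm_mk (S := Y.toAddSubgroup) d)

lemma mem_of_mem_closure_of_forall_exists_dual {Y : Subspace ℝ E} (hY : IsClosed (Y : Set E))
    {Q : Set E} {v : E} (hv : v ∈ closure Q)
    (h : ∀ d ∈ Q, ∃ χ : StrongDual ℝ E, ‖χ‖ ≤ 1 ∧ χ v = 0 ∧ χ d = Metric.infDist d Y) :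
    v ∈ Y := by
  refine (hY.mem_iff_infDist_zero ⟨0, Y.zero_mem⟩).2 <|
    le_antisymm (le_of_forall_pos_le_add fun ε hε => ?_) Metric.infDist_nonneg
  obtain ⟨d, hd, hvd⟩ := Metric.mem_closure_iff.1 hv (ε / 2) (half_pos hε)
  obtain ⟨χ, hχ, hχv, hχd⟩ := h d hd
  calc Metric.infDist v Y ≤ Metric.infDist d Y + dist v d := Metric.infDist_le_infDist_add_dist
    _ = χ (d - v) + dist v d := by rw [map_sub, hχv, sub_zero, hχd]
    _ ≤ dist v d + dist v d := by
      gcongr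
      rw [dist_comm, dist_eq_norm, ← one_mul ‖d - v‖]
      exact (le_abs_self _).trans (χ.le_of_opNorm_le hχ _)
    _ ≤ 0 + ε := by linarith

end Annihilator

section Admissible

variable {K : Type u} [TopologicalSpace K] {Γ : Type v} {e : K → Γ → ℝ} {Y : Subspace ℝ C(K, ℝ)}

/-- A countable good set of coordinates whose induced projection of `C(K)` leaves the subspace `Y`
invariant; such sets index the projectional skeleton of `Y`. -/
structure IsAdmissible (e : K → Γ → ℝ) (Y : Subspace ℝ C(K, ℝ)) (C : Set Γ) : Prop where
  countable : C.Countable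
  isGoodSet : IsGoodSet e C
  comp_mem : ∀ f ∈ Y, f.comp (coordRetraction e C) ∈ Y

namespace IsAdmissible

variable {C D : Set Γ}

/-- The projection of `Y` induced by an admissible set of coordinates. -/
noncomputable def proj (hC : IsAdmissible e Y C) : Y →L[ℝ] Y :=
  (ContinuousMap.compCLM ℝ ℝ (coordRetraction e C)).restrict hC.comp_mem

lemma proj_proj_of_subset (hinj : Function.Injective e) (hC : IsAdmissible e Y C)
    (hD : IsAdmissible e Y D) (hCD : C ⊆ D) (f : Y) : hC.proj (hD.proj f) = hC.proj f :=
  Subtype.ext <| ContinuousMap.ext fun x => congrArg f.1 <|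
    hC.isGoodSet.coordRetraction_coordRetraction_of_superset hinj hD.isGoodSet hCD x

lemma proj_proj_of_superset (hinj : Function.Injective e) (hC : IsAdmissible e Y C)
    (hD : IsAdmissible e Y D) (hCD : C ⊆ D) (f : Y) : hD.proj (hC.proj f) = hC.proj f :=
  Subtype.ext <| ContinuousMap.ext fun x => congrArg f.1 <|
    hC.isGoodSet.coordRetraction_coordRetraction_of_subset hinj hD.isGoodSet hCD x

variable [CompactSpace K]

lemma norm_proj_apply_le (hC : IsAdmissible e Y C) (f : Y) : ‖hC.proj f‖ ≤ ‖f‖ :=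
  (ContinuousMap.norm_le _ (norm_nonneg _)).2 fun _ => f.1.norm_coe_le_norm _

lemma isSeparable_range_proj (he : Continuous e) (hinj : Function.Injective e)
    (hC : IsAdmissible e Y C) : IsSeparable (range hC.proj) := by
  refine (IsEmbedding.subtypeVal.isSeparable_preimage
    (isSeparable_range_comp_coordRetraction he hinj hC.countable hC.isGoodSet)).mono ?_
  rintro _ ⟨f, rfl⟩
  exact ⟨f.1, rfl⟩

variable {C : ℕ → Set Γ}

lemma iUnion (he : Continuous e) (hinj : Function.Injective e) (hY : IsClosed (Y : Set C(K, ℝ)))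
    (hmono : Monotone C) (hC : ∀ n, IsAdmissible e Y (C n)) : IsAdmissible e Y (⋃ n, C n) where
  countable := countable_iUnion fun n => (hC n).countable
  isGoodSet := .iUnion he hinj hmono fun n => (hC n).isGoodSet
  comp_mem f hf := hY.mem_of_tendsto
    (tendsto_comp_coordRetraction he hinj hmono (fun n => (hC n).isGoodSet) f)
    (.of_forall fun n => (hC n).comp_mem f hf)

lemma tendsto_proj (he : Continuous e) (hinj : Function.Injective e) (hmono : Monotone C)
    (hC : ∀ n, IsAdmissible e Y (C n)) (hU : IsAdmissible e Y (⋃ n, C n)) (f : Y) :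
    Tendsto (fun n => (hC n).proj f) atTop (𝓝 (hU.proj f)) :=
  tendsto_subtype_rng.2 <|
    tendsto_comp_coordRetraction he hinj hmono (fun n => (hC n).isGoodSet) f.1

lemma range_proj_iUnion (he : Continuous e) (hinj : Function.Injective e) (hmono : Monotone C)
    (hC : ∀ n, IsAdmissible e Y (C n)) (hU : IsAdmissible e Y (⋃ n, C n)) :
    range hU.proj = closure (⋃ n, range (hC n).proj) := by
  refine Subset.antisymm ?_ ?_
  · rintro _ ⟨f, rfl⟩
    exact mem_closure_of_tendsto (tendsto_proj he hinj hmono hC hU f)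
      (.of_forall fun n => mem_iUnion_of_mem n (mem_range_self f))
  · have hfixed : (⋃ n, range (hC n).proj) ⊆ {f | hU.proj f = f} := by
      refine iUnion_subset fun n => ?_
      rintro _ ⟨f, rfl⟩
      exact (hC n).proj_proj_of_superset hinj hU (subset_iUnion C n) f
    exact (closure_minimal hfixed (isClosed_eq hU.proj.continuous continuous_id)).trans
      fun f hf => ⟨f, hf⟩

end IsAdmissible

variable [CompactSpace K]

lemma exists_isGoodSet_superset_forall_mem_closure (he : Continuous e)
    (hinj : Function.Injective e) (hsupp : ∀ x, (Function.support (e x)).Countable)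
    {A : C(K, ℝ) → Set Γ} (hA : ∀ d, (A d).Countable) {C : Set Γ} (hC : C.Countable) :
    ∃ D : Set Γ, C ⊆ D ∧ D.Countable ∧ IsGoodSet e D ∧ ∃ Q : Set C(K, ℝ), (∀ d ∈ Q, A d ⊆ D) ∧
      ∀ f : C(K, ℝ), f.comp (coordRetraction e D) ∈ closure Q := by
  let S := {C : Set Γ // C.Countable ∧ IsGoodSet e C}
  choose Q hQ_countable hQ using fun C : S =>
    isSeparable_range_comp_coordRetraction he hinj C.2.1 C.2.2
  have exists_next (C : S) : ∃ D : S, C.1 ⊆ D.1 ∧ ∀ d ∈ Q C, A d ⊆ D.1 := by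
    obtain ⟨D, hD, hCD, hDgood⟩ := exists_countable_isGoodSet_superset he hinj hsupp
      (C.2.1.union ((hQ_countable C).biUnion fun d _ => hA d))
    exact ⟨⟨D, hD, hDgood⟩, subset_union_left.trans hCD, fun d hd =>
      (subset_biUnion_of_mem (u := A) hd).trans (subset_union_right.trans hCD)⟩
  choose next hnext hAnext using exists_next
  obtain ⟨C₀, hC₀, hCC₀, hC₀good⟩ := exists_countable_isGoodSet_superset he hinj hsupp hC
  let F (n : ℕ) : S := next^[n] ⟨C₀, hC₀, hC₀good⟩
  have hF (n : ℕ) : F (n + 1) = next (F n) := Function.iterate_succ_apply' next n _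
  have hmono : Monotone fun n => (F n).1 :=
    monotone_nat_of_le_succ fun n => (hF n).symm ▸ hnext (F n)
  refine ⟨⋃ n, (F n).1, hCC₀.trans (subset_iUnion (fun n => (F n).1) 0),
    countable_iUnion fun n => (F n).2.1, .iUnion he hinj hmono fun n => (F n).2.2,
    ⋃ n, Q (F n), fun d hd => ?_, fun f => ?_⟩
  · obtain ⟨n, hdn⟩ := mem_iUnion.1 hd
    exact ((hF n).symm ▸ hAnext (F n) d hdn).trans (subset_iUnion (fun n => (F n).1) (n + 1))
  · refine isClosed_closure.mem_of_tendsto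
      (tendsto_comp_coordRetraction he hinj hmono (fun n => (F n).2.2) f) (.of_forall fun n => ?_)
    exact closure_mono (subset_iUnion (fun n => Q (F n)) n) (hQ (F n) ⟨f, rfl⟩)

lemma exists_isAdmissible_superset [T2Space K] [MeasurableSpace K] [BorelSpace K]
    (he : Continuous e) (hinj : Function.Injective e)
    (hsupp : ∀ x, (Function.support (e x)).Countable) (hM : HasPropertyM K)
    (hY : IsClosed (Y : Set C(K, ℝ))) {C : Set Γ} (hC : C.Countable) :
    ∃ D : Set Γ, C ⊆ D ∧ IsAdmissible e Y D := by
  choose χ hχ hχY hχd using exists_annihilator_apply_eq_infDist Y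
  choose A hA hAχ using fun d =>
    exists_countable_forall_apply_comp_coordRetraction he hinj hsupp hM (χ d)
  obtain ⟨D, hCD, hD, hDgood, Q, hQ, hQ_dense⟩ :=
    exists_isGoodSet_superset_forall_mem_closure he hinj hsupp hA hC
  refine ⟨D, hCD, hD, hDgood, fun y hy => ?_⟩
  refine mem_of_mem_closure_of_forall_exists_dual hY (hQ_dense y) fun d hd => ⟨χ d, hχ d, ?_, hχd d⟩
  rw [hAχ d D hDgood (hQ d hd), hχY d y hy]

/-- The projections induced by the admissible sets of coordinates, provided these are cofinal
among the countable sets. -/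
noncomputable def IsAdmissible.projectionalSkeleton {Γ : Type u} {e : K → Γ → ℝ}
    (he : Continuous e) (hinj : Function.Injective e) (hY : IsClosed (Y : Set C(K, ℝ)))
    (hcof : ∀ C : Set Γ, C.Countable → ∃ D, C ⊆ D ∧ IsAdmissible e Y D) :
    ProjectionalSkeleton Y where
  Γ := {C : Set Γ // IsAdmissible e Y C}
  ne := let ⟨D, _, hD⟩ := hcof ∅ countable_empty; ⟨⟨D, hD⟩⟩
  directed C D := by
    obtain ⟨E, hE, hE'⟩ := hcof _ (C.2.countable.union D.2.countable)
    exact ⟨⟨E, hE'⟩, subset_union_left.trans hE, subset_union_right.trans hE⟩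
  P C := C.2.proj
  idem C := C.2.proj_proj_of_subset hinj C.2 subset_rfl
  separable C := C.2.isSeparable_range_proj he hinj
  covers f := by
    obtain ⟨D, hD, hDf⟩ := exists_countable_forall_comp_coordRetraction_eq he hinj f.1
    obtain ⟨E, hDE, hE⟩ := hcof D hD
    exact ⟨⟨E, hE⟩, f, Subtype.ext (hDf E hE.isGoodSet hDE)⟩
  comp_eq_of_le C D hCD f :=
    ⟨C.2.proj_proj_of_subset hinj D.2 hCD f, C.2.proj_proj_of_superset hinj D.2 hCD f⟩
  sup_seq F hF := by
    have hmono : Monotone fun n => (F n).1 := hF.monotone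
    have hU := IsAdmissible.iUnion he hinj hY hmono fun n => (F n).2
    refine ⟨⟨⋃ n, (F n).1, hU⟩, ⟨?_, fun D hD => iUnion_subset fun n => hD (mem_range_self n)⟩,
      IsAdmissible.range_proj_iUnion he hinj hmono (fun n => (F n).2) hU⟩
    rintro _ ⟨n, rfl⟩
    exact subset_iUnion (fun n => (F n).1) n

end Admissible

theorem IsCorsonCompact.has1ProjectionalSkeleton {K : Type u} [TopologicalSpace K]
    [CompactSpace K] [T2Space K] [MeasurableSpace K] [BorelSpace K] (hK : IsCorsonCompact K)
    (hM : HasPropertyM K) {Y : Subspace ℝ C(K, ℝ)} (hY : IsClosed (Y : Set C(K, ℝ))) :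
    Has1ProjectionalSkeleton Y := by
  obtain ⟨Γ, A, -, hA, ⟨φ⟩⟩ := hK
  have he : Continuous fun x => (φ x : Γ → ℝ) := continuous_subtype_val.comp φ.continuous
  have hinj : Function.Injective fun x => (φ x : Γ → ℝ) :=
    Subtype.val_injective.comp φ.injective
  have hsupp (x : K) : (Function.support (φ x : Γ → ℝ)).Countable := hA _ (φ x).2
  exact ⟨IsAdmissible.projectionalSkeleton he hinj hY fun C hC =>
    exists_isAdmissible_superset he hinj hsupp hM hY hC, fun C =>
      ContinuousLinearMap.opNorm_le_bound _ zero_le_one fun f =>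
        (C.2.norm_proj_apply_le f).trans_eq (one_mul _).symm⟩

/-- For a compact Hausdorff space `K` in the class `G₀`, the following are equivalent:
(i) `K` is Corson compact with property (M);
(ii) every closed linear subspace of `C(K)` has a 1-projectional skeleton;
(iii) for every closed linear subspace `Y` of `C(K)`, the dual unit ball `(B_{Y*}, w*)`
has a retractional skeleton. -/
theorem corson_with_M_tfae (K : Type u) [TopologicalSpace K] [CompactSpace K] [T2Space K]
    [MeasurableSpace K] [BorelSpace K] (hK : InClassG0 K) :
    List.TFAE [
      IsCorsonCompact K ∧ HasPropertyM K,
      ∀ Y : Subspace ℝ C(K, ℝ), IsClosed (Y : Set C(K, ℝ)) → Has1ProjectionalSkeleton ↥Y,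
      ∀ Y : Subspace ℝ C(K, ℝ), IsClosed (Y : Set C(K, ℝ)) →
        HasRetractionalSkeleton ↥(dualBall ↥Y)] := by
  tfae_have 1 → 2 := fun ⟨hC, hM⟩ Y hY => hC.has1ProjectionalSkeleton hM hY
  tfae_have 2 → 3 := fun h Y hY => (h Y hY).hasRetractionalSkeleton
  tfae_have 3 → 1 := fun h => by
    have hH : HereditarilyHasRetractionalSkeleton K := h
    have hG : Dense (gdeltaPoints K) := hH.dense_gdeltaPoints hK
    obtain ⟨𝔱, h𝔱⟩ := hH.exists_inducedSet_eq_univ hG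
    exact ⟨𝔱.isCorsonCompact_of_inducedSet_eq_univ h𝔱, hH.hasPropertyM hG⟩
  tfae_finish
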